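/- Fix k ∈ {1,…,p−1}, a level α ∈ (0,1), and let Λ̃_k = U_kᵀ B V_k where U_k, V_k are the k-th columns of U and V. Define the confidence set CI_k = {δ ∈ ℝ : min(S_{k,δ}, 1 − S_{k,δ}) > α/2}. Then P(Λ̃_k ∈ CI_k) = 1 − α; equivalently, P( α/2 < S_{k,Λ̃_k} < 1 − α/2 ) = 1 − α. -/

import Mathlib

open MeasureTheory ProbabilityTheory Matrix

theorem skew_dot {n : Type*} [Fintype n] (A : Matrix n n ℝ) (hA : Aᵀ = -A) (x : n → ℝ) :
    x ⬝ᵥ (A *ᵥ x) = 0 := by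
  have h : x ⬝ᵥ (A *ᵥ x) = (Aᵀ *ᵥ x) ⬝ᵥ x := by
    rw [Matrix.dotProduct_mulVec, Matrix.mulVec_transpose]
  rw [hA, Matrix.neg_mulVec, neg_dotProduct, dotProduct_comm (A *ᵥ x) x] at h
  linarith

theorem skew_isUnit {n : Type*} [Fintype n] [DecidableEq n] (A : Matrix n n ℝ) (hA : Aᵀ = -A) :
    IsUnit (1 - A) := by
  rw [Matrix.isUnit_iff_isUnit_det, isUnit_iff_ne_zero]
  intro h
  obtain ⟨v, hv, hv0⟩ := Matrix.exists_mulVec_eq_zero_iff.mpr h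
  apply hv
  rw [Matrix.sub_mulVec, Matrix.one_mulVec] at hv0
  have := congrArg (fun w => v ⬝ᵥ w) hv0
  simp only [dotProduct_sub, skew_dot A hA v, sub_zero, dotProduct_zero] at this
  exact dotProduct_self_eq_zero.mp this

/-- The Cayley transform `2 (1 - A)⁻¹ - 1`. -/
noncomputable def cay {n : Type*} [Fintype n] [DecidableEq n] (A : Matrix n n ℝ) : Matrix n n ℝ :=
  (2 : ℝ) • (1 - A)⁻¹ - 1

section cayl
variable {n : Type*} [Fintype n] [DecidableEq n]

theorem skew_inv_mul (A : Matrix n n ℝ) (hA : Aᵀ = -A) : (1 - A)⁻¹ * (1 - A) = 1 :=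
  Matrix.nonsing_inv_mul _ ((Matrix.isUnit_iff_isUnit_det _).mp (skew_isUnit A hA))

theorem skew_mul_inv (A : Matrix n n ℝ) (hA : Aᵀ = -A) : (1 - A) * (1 - A)⁻¹ = 1 :=
  Matrix.mul_nonsing_inv _ ((Matrix.isUnit_iff_isUnit_det _).mp (skew_isUnit A hA))

theorem cay_mul_invT (A : Matrix n n ℝ) (hA : Aᵀ = -A) :
    cay A * ((1 - A)⁻¹)ᵀ = (1 - A)⁻¹ := by
  have h1 := skew_inv_mul A hA
  have h2 := skew_mul_inv A hA
  set M := (1 - A)⁻¹ with hM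
  have h3 : Mᵀ * (1 + A) = 1 := by
    have := congrArg Matrix.transpose h2
    simpa [Matrix.transpose_mul, Matrix.transpose_sub, hA] using this
  have h4 : (1 + A) * Mᵀ = 1 := by
    have := congrArg Matrix.transpose h1
    simpa [Matrix.transpose_mul, Matrix.transpose_sub, hA] using this
  have h5 : cay A = M * (1 + A) := by
    have : (1 + A : Matrix n n ℝ) = (2:ℝ) • 1 - (1 - A) := by
      rw [two_smul]; abel
    rw [this, mul_sub, h1, cay, ← hM]; simp
  rw [h5, mul_assoc, h4, mul_one]

theorem cay_orth (A : Matrix n n ℝ) (hA : Aᵀ = -A) : (cay A)ᵀ * cay A = 1 := by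
  have h1 := skew_inv_mul A hA
  have h := cay_mul_invT A hA
  have h' := congrArg Matrix.transpose h
  rw [Matrix.transpose_mul, Matrix.transpose_transpose] at h'
  have h6 : (1 - A) * ((1 - A)⁻¹ * (cay A)ᵀ) = (1 - A) * ((1 - A)⁻¹)ᵀ := by rw [h']
  rw [← mul_assoc, skew_mul_inv A hA, one_mul] at h6
  have h7 : cay A = (1 + A) * (1 - A)⁻¹ := by
    have : (1 + A : Matrix n n ℝ) = (2:ℝ) • 1 - (1 - A) := by
      rw [two_smul]; abel
    rw [this, sub_mul, skew_mul_inv A hA, cay]; simp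
  have h4 : (1 + A) * ((1 - A)⁻¹)ᵀ = 1 := by
    have := congrArg Matrix.transpose h1
    simpa [Matrix.transpose_mul, Matrix.transpose_sub, hA] using this
  have h3 : ((1 - A)⁻¹)ᵀ * (1 + A) = 1 := by
    exact mul_eq_one_comm.mp h4
  rw [h6, h7, mul_assoc, ← mul_assoc _ (1 + A), h3, one_mul, skew_mul_inv A hA]

end cayl

section stiefel
variable {N p : ℕ} (hNp : p ≤ N)

theorem cay_inj (A A' : Matrix (Fin N) (Fin N) ℝ) (hA : Aᵀ = -A) (hA' : A'ᵀ = -A')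
    (h0 : ∀ i j : Fin N, p ≤ i.val → p ≤ j.val → A i j = 0)
    (h0' : ∀ i j : Fin N, p ≤ i.val → p ≤ j.val → A' i j = 0)
    (h : (cay A).submatrix id (Fin.castLE hNp) = (cay A').submatrix id (Fin.castLE hNp)) :
    A = A' := by
  set ι := Fin.castLE hNp
  set K : Matrix (Fin N) (Fin p) ℝ := ((1 - A)⁻¹).submatrix id ι with hK
  set E : Matrix (Fin N) (Fin p) ℝ := (1 : Matrix (Fin N) (Fin N) ℝ).submatrix id ι with hE
  have hKK : K = ((1 - A')⁻¹).submatrix id ι := by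
    ext i j
    have := congrFun (congrFun h i) j
    simp only [cay, Matrix.submatrix_apply, Matrix.sub_apply, Matrix.smul_apply, smul_eq_mul,
      id] at this
    simp only [hK, Matrix.submatrix_apply, id]
    linarith
  have e1 : (1 - A) * K = E := by
    have : (1 - A) * K = ((1 - A) * (1 - A)⁻¹).submatrix id ι := rfl
    rw [this, skew_mul_inv A hA]
  have e2 : (1 - A') * K = E := by
    have : (1 - A') * K = ((1 - A') * (1 - A')⁻¹).submatrix id ι := by rw [hKK]; rfl
    rw [this, skew_mul_inv A' hA']
  have hK1 : IsUnit (K.submatrix ι id) := by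
    rw [Matrix.isUnit_iff_isUnit_det, isUnit_iff_ne_zero]
    intro hd
    obtain ⟨x, hx, hx0⟩ := Matrix.exists_mulVec_eq_zero_iff.mpr hd
    apply hx
    have hz : (1 - A) *ᵥ (K *ᵥ x) = E *ᵥ x := by rw [Matrix.mulVec_mulVec, e1]
    have hEx : ∀ j, (E *ᵥ x) (ι j) = x j := by
      intro j
      simp [hE, Matrix.mulVec, dotProduct, Matrix.one_apply, ι]
    have hEx' : ∀ i : Fin N, p ≤ i.val → (E *ᵥ x) i = 0 := by
      intro i hi
      simp only [hE, Matrix.mulVec, dotProduct, Matrix.submatrix_apply, id]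
      apply Finset.sum_eq_zero
      intro j _
      rw [Matrix.one_apply_ne]; · simp
      intro hh; rw [show i = ι j from hh] at hi; simp [ι] at hi; omega
    have hdot : (K *ᵥ x) ⬝ᵥ (E *ᵥ x) = 0 := by
      rw [dotProduct]
      apply Finset.sum_eq_zero
      intro i _
      by_cases hi : i.val < p
      · have : (K *ᵥ x) i = 0 := congrFun hx0 ⟨i, hi⟩
        rw [this, zero_mul]
      · rw [hEx' i (by omega), mul_zero]
    rw [← hz, Matrix.sub_mulVec, Matrix.one_mulVec, dotProduct_sub, skew_dot A hA, sub_zero] at hdot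
    have hz0 := dotProduct_self_eq_zero.mp hdot
    rw [hz0, Matrix.mulVec_zero] at hz
    ext j
    rw [← hEx j, ← hz]; rfl
  have hΔ : (A - A') * K = 0 := by
    have : (1 - A') * K - (1 - A) * K = 0 := by rw [e1, e2, sub_self]
    rw [← this, ← Matrix.sub_mul]; congr 1; abel
  set Δ := A - A' with hΔd
  have hΔs : ∀ i j, Δ i j = - Δ j i := by
    intro i j
    have a1 := congrFun (congrFun hA j) i
    have a2 := congrFun (congrFun hA' j) i
    simp only [Matrix.transpose_apply, Matrix.neg_apply] at a1 a2
    simp [hΔd, a1, a2]; ring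
  have hΔ0 : ∀ i j : Fin N, p ≤ i.val → p ≤ j.val → Δ i j = 0 := by
    intro i j hi hj; simp [hΔd, h0 i j hi hj, h0' i j hi hj]
  have key : ∀ i : Fin N, (∀ j : Fin N, p ≤ j.val → Δ i j = 0) → ∀ j : Fin p, Δ i (ι j) = 0 := by
    intro i hi
    have : (fun j : Fin p => Δ i (ι j)) ᵥ* (K.submatrix ι id) = 0 := by
      ext c
      have := congrFun (congrFun hΔ i) c
      simp only [Matrix.mul_apply, Matrix.zero_apply] at this
      rw [Matrix.vecMul, dotProduct, Pi.zero_apply, ← this]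
      simp only [Matrix.submatrix_apply, id]
      rw [← Finset.sum_image (s := Finset.univ) (g := ι) (f := fun j => Δ i j * K j c)]
      · apply Finset.sum_subset (Finset.subset_univ _)
        intro j _ hj
        have : p ≤ j.val := by
          by_contra hlt
          apply hj
          simp only [Finset.mem_image, Finset.mem_univ, true_and]
          exact ⟨⟨j, by omega⟩, rfl⟩
        rw [hi j this, zero_mul]
      · intro a _ b _ hab; exact Fin.castLE_injective hNp hab
    have h1 : (fun j : Fin p => Δ i (ι j)) = 0 := by
      have h2 := congrArg (fun w => w ᵥ* (K.submatrix ι id)⁻¹) this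
      simp only [Matrix.vecMul_vecMul, Matrix.zero_vecMul] at h2
      rwa [Matrix.mul_nonsing_inv _ ((Matrix.isUnit_iff_isUnit_det _).mp hK1),
        Matrix.vecMul_one] at h2
    exact fun j => congrFun h1 j
  have hall : Δ = 0 := by
    have hlow : ∀ i j : Fin N, p ≤ i.val → Δ i j = 0 := by
      intro i j hi
      by_cases hj : j.val < p
      · exact key i (fun j hj => hΔ0 i j hi hj) ⟨j, hj⟩
      · exact hΔ0 i j hi (by omega)
    ext i j
    by_cases hi : i.val < p
    · by_cases hj : j.val < p
      · exact key i (fun j hj => by rw [hΔs, hlow j i hj, neg_zero]) ⟨j, hj⟩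
      · rw [hΔs, hlow j i (by omega)]; simp
    · exact hlow i j (by omega)
  exact sub_eq_zero.mp hall

theorem sum_castLE_split (f : Fin N → ℝ) :
    ∑ i, f i = ∑ j : Fin p, f (Fin.castLE hNp j) + ∑ i, if p ≤ i.val then f i else 0 := by
  rw [← Finset.sum_image (s := Finset.univ) (g := Fin.castLE hNp) (f := f)]
  · have : Finset.univ.image (Fin.castLE hNp) = Finset.univ.filter (fun i : Fin N => ¬ p ≤ i.val) := by
      ext i
      simp only [Finset.mem_image, Finset.mem_univ, true_and, Finset.mem_filter, not_le]
      constructor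
      · rintro ⟨j, rfl⟩; simp
      · intro h; exact ⟨⟨i, h⟩, rfl⟩
    rw [this, ← Finset.sum_filter, add_comm, Finset.sum_filter_add_sum_filter_not]
  · intro a _ b _ hab; exact Fin.castLE_injective hNp hab

theorem cay_cover (U : Matrix (Fin N) (Fin p) ℝ) (hU : Uᵀ * U = 1)
    (hu : IsUnit (1 + U.submatrix (Fin.castLE hNp) id)) :
    ∃ A : Matrix (Fin N) (Fin N) ℝ, Aᵀ = -A ∧
      (∀ i j : Fin N, p ≤ i.val → p ≤ j.val → A i j = 0) ∧
      (cay A).submatrix id (Fin.castLE hNp) = U := by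
  set ι := Fin.castLE hNp with hι
  set U1 : Matrix (Fin p) (Fin p) ℝ := U.submatrix ι id with hU1
  have hud := (Matrix.isUnit_iff_isUnit_det _).mp hu
  set G := (1 + U1)⁻¹ with hG
  have hG1 : (1 + U1) * G = 1 := Matrix.mul_nonsing_inv _ hud
  have hG2 : G * (1 + U1) = 1 := Matrix.nonsing_inv_mul _ hud
  let U2 : Matrix (Fin N) (Fin p) ℝ := Matrix.of fun i j => if p ≤ i.val then U i j else 0
  have hsplit : U1ᵀ * U1 + U2ᵀ * U2 = 1 := by
    rw [← hU]
    ext a b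
    simp only [Matrix.add_apply, Matrix.mul_apply, Matrix.transpose_apply]
    rw [sum_castLE_split hNp (fun i => U i a * U i b)]
    congr 1
    apply Finset.sum_congr rfl
    intro i _
    simp only [U2, Matrix.of_apply]
    split_ifs <;> simp
  let A21 : Matrix (Fin N) (Fin p) ℝ := U2 * G
  have hA21 : A21 * (1 + U1) = U2 := by
    simp only [A21]; rw [Matrix.mul_assoc, hG2, Matrix.mul_one]
  have hA21z : ∀ (i : Fin N) j, i.val < p → A21 i j = 0 := by
    intro i j hi
    simp only [A21, Matrix.mul_apply]
    apply Finset.sum_eq_zero; intro x _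
    have : U2 i x = 0 := by simp only [U2, Matrix.of_apply]; rw [if_neg (by omega)]
    rw [this, zero_mul]
  let A11 : Matrix (Fin p) (Fin p) ℝ := (U1 - 1 + A21ᵀ * U2) * G
  have hA11 : A11 * (1 + U1) = U1 - 1 + A21ᵀ * U2 := by
    simp only [A11]; rw [Matrix.mul_assoc, hG2, Matrix.mul_one]
  have hskew : A11ᵀ = -A11 := by
    have h1 : (1 + U1)ᵀ * A11 * (1 + U1) = U1 - U1ᵀ := by
      rw [Matrix.mul_assoc, hA11, Matrix.mul_add, ← Matrix.mul_assoc, ← Matrix.transpose_mul, hA21,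
        Matrix.transpose_add, Matrix.transpose_one, Matrix.add_mul, Matrix.one_mul, Matrix.mul_sub,
        Matrix.mul_one]
      rw [← eq_sub_iff_add_eq'] at hsplit
      rw [hsplit]; abel
    have h2 : (1 + U1)ᵀ * (A11ᵀ + A11) * (1 + U1) = 0 := by
      rw [Matrix.mul_add _ A11ᵀ, Matrix.add_mul _ _ (1 + U1), h1]
      have := congrArg Matrix.transpose h1
      rw [Matrix.transpose_mul, Matrix.transpose_mul, Matrix.transpose_transpose,
        ← Matrix.mul_assoc, Matrix.transpose_sub, Matrix.transpose_transpose] at this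
      rw [this]; abel
    have h3 : Gᵀ * ((1 + U1)ᵀ * (A11ᵀ + A11) * (1 + U1)) * G = A11ᵀ + A11 := by
      have : Gᵀ * (1 + U1)ᵀ = 1 := by rw [← Matrix.transpose_mul, hG1, Matrix.transpose_one]
      rw [Matrix.mul_assoc, Matrix.mul_assoc, Matrix.mul_assoc, hG1,
        Matrix.mul_one, ← Matrix.mul_assoc, this, Matrix.one_mul]
    rw [h2] at h3
    simp only [Matrix.mul_zero, Matrix.zero_mul] at h3
    exact eq_neg_of_add_eq_zero_left h3.symm
  let A : Matrix (Fin N) (Fin N) ℝ := Matrix.of fun i j =>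
    if hi : i.val < p then (if hj : j.val < p then A11 ⟨i, hi⟩ ⟨j, hj⟩ else - A21 j ⟨i, hi⟩)
    else (if hj : j.val < p then A21 i ⟨j, hj⟩ else 0)
  have hA : Aᵀ = -A := by
    ext i j
    simp only [Matrix.transpose_apply, Matrix.neg_apply, A, Matrix.of_apply]
    by_cases hi : i.val < p <;> by_cases hj : j.val < p <;> simp only [hi, hj, dif_pos, dif_neg,
      not_false_eq_true, neg_neg, neg_zero]
    exact congrFun (congrFun hskew ⟨i, hi⟩) ⟨j, hj⟩
  refine ⟨A, hA, ?_, ?_⟩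
  · intro i j hi hj
    simp only [A, Matrix.of_apply]
    rw [dif_neg (by omega), dif_neg (by omega)]
  set E : Matrix (Fin N) (Fin p) ℝ := (1 : Matrix (Fin N) (Fin N) ℝ).submatrix id ι with hE
  have hEι : ∀ i j, E (ι i) j = (1 : Matrix (Fin p) (Fin p) ℝ) i j := by
    intro i j
    simp [hE, ι, Matrix.one_apply]
  have hE0 : ∀ (i : Fin N) j, p ≤ i.val → E i j = 0 := by
    intro i j hi
    simp only [hE, Matrix.submatrix_apply, id]
    rw [Matrix.one_apply_ne]
    intro h; rw [show i = ι j from h] at hi; simp [ι] at hi; omega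
  have hmain : A * (E + U) = U - E := by
    ext i c
    rw [Matrix.mul_apply, sum_castLE_split hNp]
    by_cases hi : i.val < p
    · have e := congrFun (congrFun hA11 ⟨i, hi⟩) c
      have e1 : ∑ j : Fin p, A i (ι j) * (E + U) (ι j) c = (A11 * (1 + U1)) ⟨i, hi⟩ c := by
        rw [Matrix.mul_apply]
        apply Finset.sum_congr rfl; intro j _
        rw [Matrix.add_apply, Matrix.add_apply, hEι]
        congr 1
        simp [A, hi, ι]
      have e2 : (∑ j : Fin N, if p ≤ j.val then A i j * (E + U) j c else 0)
          = - (A21ᵀ * U2) ⟨i, hi⟩ c := by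
        rw [Matrix.mul_apply, ← Finset.sum_neg_distrib]
        apply Finset.sum_congr rfl; intro j _
        by_cases hj : p ≤ j.val
        · rw [if_pos hj, Matrix.add_apply, hE0 j c hj]
          simp [A, hi, hj, not_lt.mpr hj, U2]
        · simp [hj, U2]
      rw [← hι, e1, e2, e, Matrix.add_apply, Matrix.sub_apply, Matrix.sub_apply]
      have := hEι ⟨i, hi⟩ c
      have h' : ι ⟨i, hi⟩ = i := rfl
      rw [h'] at this
      rw [this]
      simp only [hU1, Matrix.submatrix_apply, h', id]; ring
    · have e := congrFun (congrFun hA21 i) c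
      have e1 : ∑ j : Fin p, A i (ι j) * (E + U) (ι j) c = (A21 * (1 + U1) : Matrix (Fin N) (Fin p) ℝ) i c := by
        rw [Matrix.mul_apply]
        apply Finset.sum_congr rfl; intro j _
        rw [Matrix.add_apply, Matrix.add_apply, hEι]
        congr 1
        simp [A, hi, ι]
      have e2 : (∑ j : Fin N, if p ≤ j.val then A i j * (E + U) j c else 0) = 0 := by
        apply Finset.sum_eq_zero; intro j _
        by_cases hj : p ≤ j.val
        · simp [A, hi, not_lt.mpr hj]
        · simp [hj]
      rw [← hι, e1, e2, e, Matrix.sub_apply, hE0 i c (by omega)]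
      simp [U2, not_lt.mp hi]
  have h1 : (1 - A) * (E + U) = (2:ℝ) • E := by
    rw [Matrix.sub_mul, hmain, Matrix.one_mul, two_smul]; abel
  have h2 : E + U = (2:ℝ) • ((1 - A)⁻¹ * E) := by
    have := congrArg (fun W => (1 - A)⁻¹ * W) h1
    simpa [← Matrix.mul_assoc, skew_inv_mul A hA] using this
  have h3 : (1 - A)⁻¹ * E = ((1 - A)⁻¹).submatrix id ι := by
    rw [hE]
    conv_rhs => rw [← Matrix.mul_one ((1 - A)⁻¹)]
    rfl
  have : (cay A).submatrix id ι = (2:ℝ) • ((1 - A)⁻¹ * E) - E := by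
    rw [h3]; rfl
  rw [this, ← h2]; abel
end stiefel

theorem sign_lemma {p : ℕ} (M : Matrix (Fin p) (Fin p) ℝ) :
    ∃ r : Fin p → Bool, (Matrix.of fun i j => (if r i then (1:ℝ) else -1) *
      (1 : Matrix (Fin p) (Fin p) ℝ) i j + M i j).det ≠ 0 := by
  suffices h : ∀ T : Finset (Fin p), ∃ r : Fin p → Bool,
      (Matrix.of fun i j => if i ∈ T then (if r i then (1:ℝ) else -1) *
      (1 : Matrix (Fin p) (Fin p) ℝ) i j + M i j else (1 : Matrix (Fin p) (Fin p) ℝ) i j).det ≠ 0 by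
    obtain ⟨r, hr⟩ := h Finset.univ
    exact ⟨r, by simpa using hr⟩
  intro T
  induction T using Finset.induction_on with
  | empty =>
    refine ⟨fun _ => true, ?_⟩
    have : (Matrix.of fun i j => (1 : Matrix (Fin p) (Fin p) ℝ) i j) = 1 := rfl
    simp [this]
  | insert a T ha ih =>
    obtain ⟨r, hr⟩ := ih
    set K := (Matrix.of fun i j => if i ∈ T then (if r i then (1:ℝ) else -1) *
      (1 : Matrix (Fin p) (Fin p) ℝ) i j + M i j else (1 : Matrix (Fin p) (Fin p) ℝ) i j) with hK
    have hrow : K.updateRow a ((1 : Matrix (Fin p) (Fin p) ℝ) a) = K := by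
      conv_rhs => rw [← Matrix.updateRow_eq_self K a]
      congr 1
      ext j; simp [hK, ha]
    have hgen : ∀ b : Bool, (Matrix.of fun i j => if i ∈ insert a T then
        (if (Function.update r a b) i then (1:ℝ) else -1) *
        (1 : Matrix (Fin p) (Fin p) ℝ) i j + M i j else (1 : Matrix (Fin p) (Fin p) ℝ) i j).det
        = (if b then (1:ℝ) else -1) * K.det + (K.updateRow a (M a)).det := by
      intro b
      have e1 : (if b then (1:ℝ) else -1) * K.det = (K.updateRow a ((if b then (1:ℝ) else -1) •
          (1 : Matrix (Fin p) (Fin p) ℝ) a)).det := by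
        rw [Matrix.det_updateRow_smul, hrow]
      rw [e1, ← Matrix.det_updateRow_add]
      congr 1
      ext i j
      by_cases h : i = a
      · subst h; cases b <;> simp
      · simp [h, hK, Matrix.updateRow_ne h, Function.update_of_ne h]
    by_contra hcon
    push Not at hcon
    have h1 := hcon (Function.update r a true)
    have h2 := hcon (Function.update r a false)
    rw [hgen] at h1 h2
    apply hr
    simp at h1 h2
    linarith

theorem svd_unique {N p : ℕ} (U U' : Matrix (Fin N) (Fin p) ℝ) (V V' : Matrix (Fin p) (Fin p) ℝ)
    (d d' : Fin p → ℝ) (hU : Uᵀ * U = 1) (hU' : U'ᵀ * U' = 1) (hV : Vᵀ * V = 1) (hV' : V'ᵀ * V' = 1)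
    (hd : StrictAnti d) (hd' : StrictAnti d') (hp : ∀ i, 0 < d i) (hp' : ∀ i, 0 < d' i)
    (h : U * diagonal d * Vᵀ = U' * diagonal d' * V'ᵀ) :
    d = d' ∧ ∃ o : Fin p → ℝ, (∀ j, o j ^ 2 = 1) ∧ U' = U * diagonal o ∧ V' = V * diagonal o := by
  have hVV : V * Vᵀ = 1 := mul_eq_one_comm.mp hV
  have hVV' : V' * V'ᵀ = 1 := mul_eq_one_comm.mp hV'
  set O := Vᵀ * V' with hO
  have hOO : Oᵀ * O = 1 := by
    rw [hO, Matrix.transpose_mul, Matrix.transpose_transpose, Matrix.mul_assoc,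
      ← Matrix.mul_assoc V, hVV, Matrix.one_mul, hV']
  have hOO' : O * Oᵀ = 1 := mul_eq_one_comm.mp hOO
  have gram : ∀ (W : Matrix (Fin N) (Fin p) ℝ) (e : Fin p → ℝ) (Z : Matrix (Fin p) (Fin p) ℝ),
      Wᵀ * W = 1 → (W * diagonal e * Zᵀ)ᵀ * (W * diagonal e * Zᵀ) =
        Z * diagonal (fun i => e i ^ 2) * Zᵀ := by
    intro W e Z hW
    rw [Matrix.transpose_mul, Matrix.transpose_mul, Matrix.transpose_transpose,
      Matrix.diagonal_transpose]
    have : Z * (diagonal e * Wᵀ) * (W * diagonal e * Zᵀ) =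
        Z * (diagonal e * (Wᵀ * W) * diagonal e) * Zᵀ := by
      simp only [Matrix.mul_assoc]
    rw [this, hW, Matrix.mul_one, Matrix.diagonal_mul_diagonal]
    simp only [pow_two]
  have hg : V * diagonal (fun i => d i ^ 2) * Vᵀ = V' * diagonal (fun i => d' i ^ 2) * V'ᵀ := by
    rw [← gram U d V hU, ← gram U' d' V' hU', h]
  have hcomm : diagonal (fun i => d i ^ 2) * O = O * diagonal (fun i => d' i ^ 2) := by
    have := congrArg (fun W => Vᵀ * W * V') hg
    simp only [Matrix.mul_assoc] at this
    rw [hV', Matrix.mul_one, ← Matrix.mul_assoc Vᵀ V, hV, Matrix.one_mul,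
      ← Matrix.mul_assoc Vᵀ V'] at this
    exact this
  have hent : ∀ i j, O i j ≠ 0 → d i = d' j := by
    intro i j hij
    have := congrFun (congrFun hcomm i) j
    rw [Matrix.diagonal_mul, Matrix.mul_diagonal, mul_comm] at this
    have := mul_left_cancel₀ hij this
    exact (pow_left_inj₀ (hp i).le (hp' j).le two_ne_zero).mp this
  have hr : Set.range d = Set.range d' := by
    apply Set.Subset.antisymm
    · rintro _ ⟨i, rfl⟩
      have : ∃ j, O i j ≠ 0 := by
        by_contra hcon
        push Not at hcon
        have := congrFun (congrFun hOO' i) i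
        simp [Matrix.mul_apply, hcon] at this
      obtain ⟨j, hj⟩ := this
      exact ⟨j, (hent i j hj).symm⟩
    · rintro _ ⟨j, rfl⟩
      have : ∃ i, O i j ≠ 0 := by
        by_contra hcon
        push Not at hcon
        have := congrFun (congrFun hOO j) j
        simp [Matrix.mul_apply, hcon] at this
      obtain ⟨i, hi⟩ := this
      exact ⟨i, hent i j hi⟩
  have hdd : d = d' := (hd.range_inj hd').mp hr
  refine ⟨hdd, fun j => O j j, ?_⟩
  have hOd : O = diagonal (fun j => O j j) := by
    ext i j
    by_cases hij : i = j
    · subst hij; simp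
    · rw [Matrix.diagonal_apply_ne _ hij]
      by_contra hne
      have := hent i j hne
      rw [← hdd] at this
      exact hij (hd.injective this)
  have hVO : V' = V * O := by rw [hO, ← Matrix.mul_assoc, hVV, Matrix.one_mul]
  refine ⟨?_, ?_, ?_⟩
  · intro j
    have := congrFun (congrFun hOO j) j
    rw [hOd, Matrix.diagonal_transpose, Matrix.diagonal_mul_diagonal, Matrix.diagonal_apply_eq,
      Matrix.one_apply_eq] at this
    rw [pow_two]; exact this
  · have h1 := congrArg (fun W => W * V') h
    simp only [Matrix.mul_assoc] at h1
    rw [hV', Matrix.mul_one, ← hO] at h1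
    rw [← hdd] at h1
    rw [← hOd]
    have hcomm2 : diagonal d * O = O * diagonal d := by
      rw [hOd, Matrix.diagonal_mul_diagonal, Matrix.diagonal_mul_diagonal]
      simp only [mul_comm]
    rw [hcomm2, ← Matrix.mul_assoc] at h1
    ext i j
    have := congrFun (congrFun h1 i) j
    rw [Matrix.mul_diagonal, Matrix.mul_diagonal] at this
    exact (mul_right_cancel₀ (hp j).ne' this).symm
  · rw [← hOd]; exact hVO

section param
variable {N p : ℕ} (hNp : p ≤ N)

/-- strictly lower part of `X`, as an `N × N` matrix -/
def lowM (X : Fin N → Fin p → ℝ) : Matrix (Fin N) (Fin N) ℝ :=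
  Matrix.of fun i j => if h : j.val < p then (if j < i then X i ⟨j, h⟩ else 0) else 0

/-- strictly upper part of `X`, as a `p × p` matrix -/
def upM (X : Fin N → Fin p → ℝ) : Matrix (Fin p) (Fin p) ℝ :=
  Matrix.of fun i j => if i < j then X (Fin.castLE hNp i) j else 0

/-- skew matrix from the lower part -/
def SA (X : Fin N → Fin p → ℝ) : Matrix (Fin N) (Fin N) ℝ := lowM X - (lowM X)ᵀ

/-- skew matrix from the upper part -/
def SB (X : Fin N → Fin p → ℝ) : Matrix (Fin p) (Fin p) ℝ := upM hNp X - (upM hNp X)ᵀ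

/-- diagonal part -/
def dg (X : Fin N → Fin p → ℝ) : Fin p → ℝ := fun j => X (Fin.castLE hNp j) j

theorem SA_skew (X : Fin N → Fin p → ℝ) : (SA X)ᵀ = - SA X := by
  simp [SA]

theorem SB_skew (X : Fin N → Fin p → ℝ) : (SB hNp X)ᵀ = - SB hNp X := by
  simp [SB]

theorem SA_zero (X : Fin N → Fin p → ℝ) (i j : Fin N) (hi : p ≤ i.val) (hj : p ≤ j.val) :
    SA X i j = 0 := by
  simp [SA, lowM, not_lt.mpr hi, not_lt.mpr hj]

theorem SA_low (X : Fin N → Fin p → ℝ) (i : Fin N) (j : Fin p) (h : j.val < i.val) :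
    SA X i (Fin.castLE hNp j) = X i j := by
  have h1 : Fin.castLE hNp j < i := h
  simp [SA, lowM, h1, not_lt.mpr h1.le]

theorem SB_up (X : Fin N → Fin p → ℝ) (i j : Fin p) (h : i < j) :
    SB hNp X i j = X (Fin.castLE hNp i) j := by
  simp [SB, upM, h, not_lt.mpr h.le]

theorem SA_add (X Z : Fin N → Fin p → ℝ) : SA (X + Z) = SA X + SA Z := by
  ext i j
  simp only [SA, lowM, Matrix.sub_apply, Matrix.add_apply, Matrix.transpose_apply, Matrix.of_apply,
    Pi.add_apply]
  split_ifs <;> ring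

theorem SB_add (X Z : Fin N → Fin p → ℝ) : SB hNp (X + Z) = SB hNp X + SB hNp Z := by
  ext i j
  simp only [SB, upM, Matrix.sub_apply, Matrix.add_apply, Matrix.transpose_apply, Matrix.of_apply,
    Pi.add_apply]
  split_ifs <;> ring

theorem SA_smul (c : ℝ) (X : Fin N → Fin p → ℝ) : SA (c • X) = c • SA X := by
  ext i j
  simp only [SA, lowM, Matrix.sub_apply, Matrix.smul_apply, Matrix.transpose_apply, Matrix.of_apply,
    Pi.smul_apply, smul_eq_mul]
  split_ifs <;> ring

theorem SB_smul (c : ℝ) (X : Fin N → Fin p → ℝ) : SB hNp (c • X) = c • SB hNp X := by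
  ext i j
  simp only [SB, upM, Matrix.sub_apply, Matrix.smul_apply, Matrix.transpose_apply, Matrix.of_apply,
    Pi.smul_apply, smul_eq_mul]
  split_ifs <;> ring

/-- build coordinates from skew matrices and a diagonal -/
def mkX (A : Matrix (Fin N) (Fin N) ℝ) (B : Matrix (Fin p) (Fin p) ℝ) (d : Fin p → ℝ) :
    Fin N → Fin p → ℝ := fun i j =>
  if i.val = j.val then d j else
  if j.val < i.val then A i (Fin.castLE hNp j) else
  if h : i.val < p then B ⟨i, h⟩ j else 0

theorem dg_mkX (A : Matrix (Fin N) (Fin N) ℝ) (B : Matrix (Fin p) (Fin p) ℝ) (d : Fin p → ℝ) :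
    dg hNp (mkX hNp A B d) = d := by
  ext j; simp [dg, mkX]

theorem SA_mkX (A : Matrix (Fin N) (Fin N) ℝ) (B : Matrix (Fin p) (Fin p) ℝ) (d : Fin p → ℝ)
    (hA : Aᵀ = -A) (h0 : ∀ i j : Fin N, p ≤ i.val → p ≤ j.val → A i j = 0) :
    SA (mkX hNp A B d) = A := by
  have hs : ∀ i j, A i j = - A j i := fun i j => congrFun (congrFun hA j) i
  have hl : ∀ (i j : Fin N), j < i → SA (mkX hNp A B d) i j = A i j := by
    intro i j hij
    by_cases hj : j.val < p
    · have := SA_low hNp (mkX hNp A B d) i ⟨j, hj⟩ hij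
      have hc : Fin.castLE hNp ⟨j, hj⟩ = j := rfl
      rw [hc] at this
      rw [this]
      have h1 : j.val < i.val := hij
      simp [mkX, h1, h1.ne', hc]
    · have hi : p ≤ i.val := by have : j.val < i.val := hij; omega
      rw [SA_zero _ i j hi (by omega), h0 i j hi (by omega)]
  have hs' : ∀ i j, SA (mkX hNp A B d) i j = - SA (mkX hNp A B d) j i :=
    fun i j => congrFun (congrFun (SA_skew (mkX hNp A B d)) j) i
  ext i j
  rcases lt_trichotomy i j with h | h | h
  · rw [hs', hs, hl j i h]
  · subst h
    have := hs i i; have := hs' i i; linarith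
  · exact hl i j h

theorem SB_mkX (A : Matrix (Fin N) (Fin N) ℝ) (B : Matrix (Fin p) (Fin p) ℝ) (d : Fin p → ℝ)
    (hB : Bᵀ = -B) : SB hNp (mkX hNp A B d) = B := by
  have hs : ∀ i j, B i j = - B j i := fun i j => congrFun (congrFun hB j) i
  have hl : ∀ i j, i < j → SB hNp (mkX hNp A B d) i j = B i j := by
    intro i j hij
    rw [SB_up hNp _ i j hij]
    have h1 : i.val < j.val := hij
    simp [mkX, h1.ne, not_lt.mpr h1.le]
  have hs' : ∀ i j, SB hNp (mkX hNp A B d) i j = - SB hNp (mkX hNp A B d) j i :=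
    fun i j => congrFun (congrFun (SB_skew hNp (mkX hNp A B d)) j) i
  ext i j
  rcases lt_trichotomy i j with h | h | h
  · exact hl i j h
  · subst h
    have := hs i i; have := hs' i i; linarith
  · rw [hs', hs, hl j i h]

theorem mkX_SA_SB (X : Fin N → Fin p → ℝ) : mkX hNp (SA X) (SB hNp X) (dg hNp X) = X := by
  ext i j
  simp only [mkX]
  split_ifs with h1 h2 h3
  · have : Fin.castLE hNp j = i := Fin.ext h1.symm
    simp [dg, this]
  · exact SA_low hNp X i j h2
  · rw [SB_up hNp X ⟨i, h3⟩ j (by rw [Fin.lt_def]; simp only; omega)]; rfl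
  · exfalso; omega

end param

section deriv
attribute [local instance] Matrix.linftyOpNormedAddCommGroup Matrix.linftyOpNormedRing
  Matrix.linftyOpNormedSpace Matrix.linftyOpNormedAlgebra

theorem cay_hasFDeriv {n : Type*} [Fintype n] [DecidableEq n]
    {E : Type*} [NormedAddCommGroup E] [NormedSpace ℝ E] [FiniteDimensional ℝ E]
    (S : E →ₗ[ℝ] Matrix n n ℝ) (hS : ∀ X, (S X)ᵀ = - S X) (X : E) (a b : n) :
    ∃ L : E →L[ℝ] ℝ, HasFDerivAt (fun X => cay (S X) a b) L X ∧
      ∀ H, L H = 2 * ((1 - S X)⁻¹ * S H * (1 - S X)⁻¹) a b := by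
  obtain ⟨u, hu⟩ := skew_isUnit (S X) (hS X)
  let Sc : E →L[ℝ] Matrix n n ℝ := LinearMap.toContinuousLinearMap S
  have h1 : HasFDerivAt (fun X => (1 : Matrix n n ℝ) - Sc X) (-Sc) X :=
    (Sc.hasFDerivAt).const_sub 1
  have h2 := hasFDerivAt_ringInverse (𝕜 := ℝ) (R := Matrix n n ℝ) u
  have h1' : (1 : Matrix n n ℝ) - Sc X = u := hu.symm
  rw [← h1'] at h2
  have h3 := h2.comp X h1
  let ev : Matrix n n ℝ →L[ℝ] ℝ := LinearMap.toContinuousLinearMap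
    ((LinearMap.proj b : (n → ℝ) →ₗ[ℝ] ℝ) ∘ₗ (LinearMap.proj a : (n → n → ℝ) →ₗ[ℝ] (n → ℝ)))
  have hev : ∀ M, ev M = M a b := fun M => rfl
  have h4 := (ev.hasFDerivAt.comp X h3).const_mul 2
  have h5 := h4.sub_const ((1 : Matrix n n ℝ) a b)
  refine ⟨_, h5.congr_of_eventuallyEq (Filter.Eventually.of_forall fun Z => ?_), ?_⟩
  · simp only [cay, Function.comp, hev, Matrix.sub_apply, Matrix.smul_apply, smul_eq_mul,
      Matrix.nonsing_inv_eq_ringInverse]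
    rfl
  · intro H
    have hinv : (↑u⁻¹ : Matrix n n ℝ) = (1 - S X)⁻¹ := by
      rw [← hu, Matrix.coe_units_inv]
    change 2 * ev (-((↑u⁻¹ : Matrix n n ℝ) * (-(S H)) * (↑u⁻¹ : Matrix n n ℝ))) = _
    rw [hev, hinv]
    simp only [mul_neg, neg_mul, neg_neg]
end deriv

section jac
variable {N p : ℕ} (hNp : p ≤ N)

def SAl : (Fin N → Fin p → ℝ) →ₗ[ℝ] Matrix (Fin N) (Fin N) ℝ where
  toFun := SA
  map_add' := SA_add
  map_smul' := SA_smul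

def SBl : (Fin N → Fin p → ℝ) →ₗ[ℝ] Matrix (Fin p) (Fin p) ℝ where
  toFun := SB hNp
  map_add' := SB_add hNp
  map_smul' := SB_smul hNp

noncomputable def Uc (X : Fin N → Fin p → ℝ) : Matrix (Fin N) (Fin p) ℝ :=
  (cay (SA X)).submatrix id (Fin.castLE hNp)

noncomputable def Vc (X : Fin N → Fin p → ℝ) : Matrix (Fin p) (Fin p) ℝ := cay (SB hNp X)

noncomputable def Fm (t : Fin N → ℝ) (r : Fin p → ℝ) (X : Fin N → Fin p → ℝ) : Fin N → Fin p → ℝ :=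
  fun i j => t i * r j * ∑ c, Uc hNp X i c * dg hNp X c * Vc hNp X j c

/-- pointwise multiplication -/
def Dop (c : Fin N → Fin p → ℝ) : (Fin N → Fin p → ℝ) →ₗ[ℝ] (Fin N → Fin p → ℝ) where
  toFun H := fun i j => c i j * H i j
  map_add' H K := by ext i j; simp [mul_add]
  map_smul' a H := by ext i j; simp; ring

theorem det_Dop (c : Fin N → Fin p → ℝ) : LinearMap.det (Dop c) = ∏ i, ∏ j, c i j := by
  let e : (Fin N × Fin p → ℝ) ≃ₗ[ℝ] (Fin N → Fin p → ℝ) := LinearEquiv.curry ℝ ℝ (Fin N) (Fin p)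
  have h : Dop c = (e : _ →ₗ[ℝ] _) ∘ₗ (Matrix.toLin' (diagonal fun q : Fin N × Fin p => c q.1 q.2))
      ∘ₗ (e.symm : _ →ₗ[ℝ] _) := by
    refine LinearMap.ext fun H => ?_
    funext i j
    simp [Dop, e, Matrix.mulVec_diagonal]
  rw [h, LinearMap.det_conj, LinearMap.det_toLin', Matrix.det_diagonal,
    Fintype.prod_prod_type]

/-- the core Jacobian operator -/
def Phi (d : Fin p → ℝ) : (Fin N → Fin p → ℝ) →ₗ[ℝ] (Fin N → Fin p → ℝ) where
  toFun H := fun i j => if h : i.val < p then (if i.val = j.val then H i j else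
      if i.val < j.val then -(d ⟨i, h⟩ * H i j + d j * H (Fin.castLE hNp j) ⟨i, h⟩)
      else d j * H i j + d ⟨i, h⟩ * H (Fin.castLE hNp j) ⟨i, h⟩)
    else d j * H i j
  map_add' H K := by
    ext i j; simp only [Pi.add_apply]; split_ifs <;> ring
  map_smul' a H := by
    ext i j; simp only [Pi.smul_apply, smul_eq_mul, RingHom.id_apply]; split_ifs <;> ring

/-- diagonal of `Phi ∘ Phi` -/
def gam (d : Fin p → ℝ) (i : Fin N) (j : Fin p) : ℝ :=
  if h : i.val < p then (if i.val = j.val then 1 else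
      if i.val < j.val then d ⟨i, h⟩ ^ 2 - d j ^ 2 else d j ^ 2 - d ⟨i, h⟩ ^ 2)
    else d j ^ 2

theorem Phi_sq (d : Fin p → ℝ) : (Phi hNp d) ∘ₗ (Phi hNp d) = Dop (gam d) := by
  refine LinearMap.ext fun H => ?_
  funext i j
  simp only [LinearMap.comp_apply, Phi, LinearMap.coe_mk, AddHom.coe_mk, Dop, gam]
  by_cases h : i.val < p
  · have hj : (Fin.castLE hNp j).val < p := j.2
    have e1 : (⟨(Fin.castLE hNp j).val, hj⟩ : Fin p) = j := rfl
    have e2 : Fin.castLE hNp ⟨i.val, h⟩ = i := rfl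
    have e3 : (Fin.castLE hNp j).val = j.val := rfl
    rcases lt_trichotomy i.val j.val with hl | hl | hl
    · simp [h, hl, hl.ne, hl.ne', not_lt.mpr hl.le]; ring
    · simp [h, hl]
    · simp [h, hl, hl.ne, hl.ne', not_lt.mpr hl.le]; ring
  · simp [h]; ring

theorem det_Phi_sq (d : Fin p → ℝ) :
    LinearMap.det (Phi hNp d) ^ 2 = ∏ i : Fin N, ∏ j : Fin p, gam d i j := by
  rw [pow_two, ← LinearMap.det_comp, Phi_sq, det_Dop]

theorem det_Phi_fac (k : Fin p) :
    ∃ w : (Fin p → ℝ) → ℝ, (∀ d, 0 ≤ w d) ∧ (∀ d z, w (Function.update d k z) = w d) ∧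
      ∀ d, 0 ≤ d k → |LinearMap.det (Phi hNp d)| =
        (d k ^ (N - p) * ∏ j ∈ Finset.univ.erase k, |d k ^ 2 - d j ^ 2|) * w d := by
  let ι := Fin.castLE hNp
  refine ⟨fun d => Real.sqrt (∏ i ∈ Finset.univ.erase (ι k), ∏ j ∈ Finset.univ.erase k, |gam d i j|),
    fun d => Real.sqrt_nonneg _, ?_, ?_⟩
  · intro d z
    refine congrArg Real.sqrt ?_
    apply Finset.prod_congr rfl
    intro i hi
    apply Finset.prod_congr rfl
    intro j hj
    have hj' : j ≠ k := Finset.ne_of_mem_erase hj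
    have hi' : i ≠ ι k := Finset.ne_of_mem_erase hi
    have : ∀ h : i.val < p, (⟨i.val, h⟩ : Fin p) ≠ k := by
      intro h hh; apply hi'; rw [← hh]; rfl
    simp only [gam]
    congr 1
    split_ifs with h <;> simp [Function.update_of_ne hj', this]
  · intro d hd
    have hnn : 0 ≤ d k ^ (N - p) * ∏ j ∈ Finset.univ.erase k, |d k ^ 2 - d j ^ 2| :=
      mul_nonneg (pow_nonneg hd _) (Finset.prod_nonneg fun _ _ => abs_nonneg _)
    rw [← Real.sqrt_sq_eq_abs, det_Phi_sq]
    have hprod : (∏ i : Fin N, ∏ j : Fin p, gam d i j) =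
        |∏ i : Fin N, ∏ j : Fin p, gam d i j| := by
      rw [abs_of_nonneg]; rw [← det_Phi_sq hNp]; positivity
    rw [hprod, Finset.abs_prod]
    simp only [Finset.abs_prod]
    have hcol : (∏ i : Fin N, |gam d i k|) =
        (d k ^ (N - p)) ^ 2 * ∏ j ∈ Finset.univ.erase k, |d k ^ 2 - d j ^ 2| := by
      have hs : (Finset.univ : Finset (Fin N)) = (Finset.univ.image ι) ∪
          (Finset.univ.filter fun i : Fin N => p ≤ i.val) := by
        ext i
        simp only [Finset.mem_univ, Finset.mem_union, Finset.mem_image, true_and,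
          Finset.mem_filter, true_iff]
        by_cases h : i.val < p
        · left; exact ⟨⟨i, h⟩, rfl⟩
        · right; omega
      have hdis : Disjoint (Finset.univ.image ι) (Finset.univ.filter fun i : Fin N => p ≤ i.val) := by
        rw [Finset.disjoint_left]
        intro i hi
        simp only [Finset.mem_image, Finset.mem_univ, true_and] at hi
        obtain ⟨j, rfl⟩ := hi
        simp [ι]
      have hcard : (Finset.univ.filter fun i : Fin N => p ≤ i.val).card = N - p := by
        have h1 := congrArg Finset.card hs
        rw [Finset.card_union_of_disjoint hdis, Finset.card_image_of_injective _
          (Fin.castLE_injective hNp)] at h1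
        simp only [Finset.card_univ, Fintype.card_fin] at h1
        omega
      rw [hs, Finset.prod_union hdis, mul_comm]
      congr 1
      · have : ∀ i ∈ (Finset.univ.filter fun i : Fin N => p ≤ i.val), |gam d i k| = d k ^ 2 := by
          intro i hi
          simp only [Finset.mem_filter, Finset.mem_univ, true_and] at hi
          simp [gam, not_lt.mpr hi]
        rw [Finset.prod_congr rfl this, Finset.prod_const, hcard]; ring
      · rw [Finset.prod_image (fun a _ b _ hab => Fin.castLE_injective hNp hab),
          ← Finset.mul_prod_erase _ _ (Finset.mem_univ k)]
        have : |gam d (ι k) k| = 1 := by simp [gam, ι]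
        rw [this, one_mul]
        apply Finset.prod_congr rfl
        intro j hj
        have hj' : j.val ≠ k.val := fun h => Finset.ne_of_mem_erase hj (Fin.ext h)
        have hjj : gam d (ι j) k = if j.val < k.val then d j ^ 2 - d k ^ 2
            else d k ^ 2 - d j ^ 2 := by
          unfold gam
          rw [dif_pos (show (ι j).val < p from j.2),
            if_neg (show ¬ (ι j).val = k.val from hj')]
          rfl
        rw [hjj]
        split_ifs
        · rw [abs_sub_comm]
        · rfl
    have hrow : (∏ j ∈ Finset.univ.erase k, |gam d (ι k) j|) =
        ∏ j ∈ Finset.univ.erase k, |d k ^ 2 - d j ^ 2| := by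
      apply Finset.prod_congr rfl
      intro j hj
      have hj' : k.val ≠ j.val := fun h => Finset.ne_of_mem_erase hj (Fin.ext h.symm)
      have hjj : gam d (ι k) j = if k.val < j.val then d k ^ 2 - d j ^ 2
            else d j ^ 2 - d k ^ 2 := by
          unfold gam
          rw [dif_pos (show (ι k).val < p from k.2),
            if_neg (show ¬ (ι k).val = j.val from hj')]
          rfl
      rw [hjj]
      split_ifs
      · rfl
      · rw [abs_sub_comm]
    have hall : (∏ i : Fin N, ∏ j : Fin p, |gam d i j|) =
        (d k ^ (N - p) * ∏ j ∈ Finset.univ.erase k, |d k ^ 2 - d j ^ 2|) ^ 2 *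
        (∏ i ∈ Finset.univ.erase (ι k), ∏ j ∈ Finset.univ.erase k, |gam d i j|) := by
      have : ∀ i : Fin N, ∏ j : Fin p, |gam d i j| =
          |gam d i k| * ∏ j ∈ Finset.univ.erase k, |gam d i j| := fun i =>
        (Finset.mul_prod_erase _ _ (Finset.mem_univ k)).symm
      simp only [this]
      rw [Finset.prod_mul_distrib, hcol, ← Finset.mul_prod_erase Finset.univ
        (fun i => ∏ j ∈ Finset.univ.erase k, |gam d i j|) (Finset.mem_univ (ι k)), hrow]
      ring
    rw [hall, Real.sqrt_mul (sq_nonneg _), Real.sqrt_sq hnn]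

theorem det_Phi_zero (hlt : p < N) (d : Fin p → ℝ) (hanti : Antitone d) (hnn : ∀ i, 0 ≤ d i)
    (hbad : ¬ (StrictAnti d ∧ ∀ i, 0 < d i)) : LinearMap.det (Phi hNp d) = 0 := by
  have : LinearMap.det (Phi hNp d) ^ 2 = 0 := by
    rw [det_Phi_sq]
    by_cases h0 : ∀ i, 0 < d i
    · have hs : ¬ StrictAnti d := fun h => hbad ⟨h, h0⟩
      have : ¬ Function.Injective d := fun h => hs (hanti.strictAnti_of_injective h)
      rw [Function.Injective] at this
      push Not at this
      obtain ⟨a, b, hab, hne⟩ := this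
      apply Finset.prod_eq_zero (Finset.mem_univ (Fin.castLE hNp a))
      apply Finset.prod_eq_zero (Finset.mem_univ b)
      have : a.val ≠ b.val := fun h => hne (Fin.ext h)
      simp [gam, this, hab]
    · push Not at h0
      obtain ⟨j, hj⟩ := h0
      have : d j = 0 := le_antisymm hj (hnn j)
      apply Finset.prod_eq_zero (Finset.mem_univ (⟨p, hlt⟩ : Fin N))
      apply Finset.prod_eq_zero (Finset.mem_univ j)
      simp [gam, this]
  simpa using this

/-- action of derivative on skew coordinates -/
noncomputable def Lx (X : Fin N → Fin p → ℝ) : (Fin N → Fin p → ℝ) →ₗ[ℝ] (Fin N → Fin p → ℝ) where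
  toFun H := mkX hNp ((2:ℝ) • (((1 - SA X)⁻¹)ᵀ * SA H * (1 - SA X)⁻¹))
    ((2:ℝ) • (((1 - SB hNp X)⁻¹)ᵀ * SB hNp H * (1 - SB hNp X)⁻¹)) (dg hNp H)
  map_add' H K := by
    ext i j
    simp only [SA_add, SB_add, Matrix.mul_add, Matrix.add_mul, mkX, Pi.add_apply, dg,
      Matrix.add_apply, smul_add]
    split_ifs <;> ring
  map_smul' a H := by
    ext i j
    simp only [SA_smul, SB_smul, Matrix.mul_smul, Matrix.smul_mul, mkX, Pi.smul_apply, dg,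
      Matrix.smul_apply, smul_eq_mul, RingHom.id_apply]
    split_ifs <;> ring

noncomputable def Psi (t : Fin N → ℝ) (r : Fin p → ℝ) (X : Fin N → Fin p → ℝ) :
    (Fin N → Fin p → ℝ) →ₗ[ℝ] (Fin N → Fin p → ℝ) where
  toFun H := fun i j => t i * r j * (cay (SA X) * Matrix.of H * (cay (SB hNp X))ᵀ) i j
  map_add' H K := by
    ext i j
    have : Matrix.of (H + K) = Matrix.of H + Matrix.of K := rfl
    simp only [this, Matrix.mul_add, Matrix.add_mul, Matrix.add_apply, Pi.add_apply]; ring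
  map_smul' a H := by
    ext i j
    have : Matrix.of (a • H) = a • Matrix.of H := rfl
    simp only [this, Matrix.mul_smul, Matrix.smul_mul, Matrix.smul_apply, Pi.smul_apply,
      smul_eq_mul, RingHom.id_apply]; ring

theorem SA_mkX_sub (A : Matrix (Fin N) (Fin N) ℝ) (B : Matrix (Fin p) (Fin p) ℝ) (d : Fin p → ℝ)
    (hA : Aᵀ = -A) :
    (SA (mkX hNp A B d)).submatrix id (Fin.castLE hNp) = A.submatrix id (Fin.castLE hNp) := by
  have hs : ∀ i j, A i j = - A j i := fun i j => congrFun (congrFun hA j) i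
  have hl : ∀ (i j : Fin N), j < i → j.val < p → SA (mkX hNp A B d) i j = A i j := by
    intro i j hij hj
    have := SA_low hNp (mkX hNp A B d) i ⟨j, hj⟩ hij
    have hc : Fin.castLE hNp ⟨j, hj⟩ = j := rfl
    rw [hc] at this
    rw [this]
    have h1 : j.val < i.val := hij
    simp [mkX, h1, h1.ne', hc]
  have hs' : ∀ i j, SA (mkX hNp A B d) i j = - SA (mkX hNp A B d) j i :=
    fun i j => congrFun (congrFun (SA_skew (mkX hNp A B d)) j) i
  ext i j
  simp only [Matrix.submatrix_apply, id_eq]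
  have hjp : (Fin.castLE hNp j).val < p := j.2
  generalize Fin.castLE hNp j = j' at hjp
  rcases lt_trichotomy i j' with h | h | h
  · rw [hs', hs, hl j' i h (lt_trans h hjp)]
  · subst h
    have := hs i i; have := hs' i i; linarith
  · exact hl i j' h hjp

/-- matrix form of Phi -/
theorem Phi_eq (d : Fin p → ℝ) (H : Fin N → Fin p → ℝ) :
    Matrix.of (Phi hNp d H) = (SA H).submatrix id (Fin.castLE hNp) * diagonal d +
      (1 : Matrix (Fin N) (Fin N) ℝ).submatrix id (Fin.castLE hNp) * diagonal (dg hNp H) +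
      (1 : Matrix (Fin N) (Fin N) ℝ).submatrix id (Fin.castLE hNp) * diagonal d * (SB hNp H)ᵀ := by
  ext i j
  have hsA : ∀ a b, SA H a b = - SA H b a := fun a b => congrFun (congrFun (SA_skew H) b) a
  have hsB : ∀ a b, SB hNp H a b = - SB hNp H b a :=
    fun a b => congrFun (congrFun (SB_skew hNp H) b) a
  simp only [Matrix.of_apply, Matrix.add_apply, Matrix.mul_diagonal, Matrix.submatrix_apply, id_eq]
  rw [Matrix.mul_apply]
  simp only [Matrix.mul_diagonal, Matrix.submatrix_apply, id_eq, Matrix.transpose_apply]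
  simp only [Phi, LinearMap.coe_mk, AddHom.coe_mk]
  change _ = SA H i (Fin.castLE hNp j) * d j + (1 : Matrix (Fin N) (Fin N) ℝ) i (Fin.castLE hNp j) *
    dg hNp H j + ∑ c : Fin p, (1 : Matrix (Fin N) (Fin N) ℝ) i (Fin.castLE hNp c) * d c * SB hNp H j c
  by_cases h : i.val < p
  · have hsum : ∑ c : Fin p, (1 : Matrix (Fin N) (Fin N) ℝ) i (Fin.castLE hNp c) * d c *
        SB hNp H j c = d ⟨i, h⟩ * SB hNp H j ⟨i, h⟩ := by
      rw [Finset.sum_eq_single (⟨i, h⟩ : Fin p)]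
      · have : Fin.castLE hNp ⟨i, h⟩ = i := rfl
        rw [this, Matrix.one_apply_eq, one_mul]
      · intro c _ hc
        rw [Matrix.one_apply_ne, zero_mul, zero_mul]
        intro hh; apply hc; ext; exact (congrArg Fin.val hh).symm
      · simp
    rw [hsum, dif_pos h]
    rcases lt_trichotomy i.val j.val with hl | hl | hl
    · rw [if_neg hl.ne, if_pos hl, Matrix.one_apply_ne (by intro hh; rw [hh] at hl; simp at hl),
        hsB, SB_up hNp H ⟨i, h⟩ j hl, hsA]
      have e1 : SA H (Fin.castLE hNp j) i = H (Fin.castLE hNp j) ⟨i, h⟩ :=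
        SA_low hNp H (Fin.castLE hNp j) ⟨i, h⟩ hl
      have e2 : Fin.castLE hNp ⟨i, h⟩ = i := rfl
      rw [e1, e2]
      ring
    · have hi : i = Fin.castLE hNp j := Fin.ext hl
      subst hi
      have e1 := hsA (Fin.castLE hNp j) (Fin.castLE hNp j)
      have e2 := hsB j j
      have e3 : (⟨(Fin.castLE hNp j).val, h⟩ : Fin p) = j := rfl
      rw [if_pos hl, e3, Matrix.one_apply_eq, show SA H (Fin.castLE hNp j) (Fin.castLE hNp j) = 0
        by linarith, show SB hNp H j j = 0 by linarith]
      simp [dg]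
    · rw [if_neg hl.ne', if_neg (by omega), SA_low hNp H i j hl,
        SB_up hNp H j ⟨i, h⟩ hl, Matrix.one_apply_ne (by intro hh; rw [hh] at hl; simp at hl)]
      ring
  · have hne : ∀ c : Fin p, i ≠ Fin.castLE hNp c := by
      intro c hc; apply h; rw [hc]; exact c.2
    rw [dif_neg h, SA_low hNp H i j (by omega), Matrix.one_apply_ne (hne j),
      Finset.sum_eq_zero]
    · ring
    · intro c _; rw [Matrix.one_apply_ne (hne c)]; ring

theorem Fm_hasFDeriv (t : Fin N → ℝ) (r : Fin p → ℝ) (X : Fin N → Fin p → ℝ) :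
    HasFDerivAt (Fm hNp t r) (LinearMap.toContinuousLinearMap
      (Psi hNp t r X ∘ₗ Phi hNp (dg hNp X) ∘ₗ Lx hNp X)) X := by
  set ι := Fin.castLE hNp with hι
  rw [hasFDerivAt_pi']
  intro i
  rw [hasFDerivAt_pi']
  intro j
  have hA := fun c => cay_hasFDeriv (SAl (N := N) (p := p)) SA_skew X i (ι c)
  have hB := fun c => cay_hasFDeriv (SBl hNp) (SB_skew hNp) X j c
  choose LA hA1 hA2 using hA
  choose LB hB1 hB2 using hB
  have hD : ∀ c : Fin p, HasFDerivAt (fun X : Fin N → Fin p → ℝ => dg hNp X c)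
      ((ContinuousLinearMap.proj c : (Fin p → ℝ) →L[ℝ] ℝ) ∘L
        (ContinuousLinearMap.proj (ι c) : (Fin N → Fin p → ℝ) →L[ℝ] (Fin p → ℝ))) X := fun c =>
    ((ContinuousLinearMap.proj c : (Fin p → ℝ) →L[ℝ] ℝ) ∘L
        (ContinuousLinearMap.proj (ι c) : (Fin N → Fin p → ℝ) →L[ℝ] (Fin p → ℝ))).hasFDerivAt
  have h := (HasFDerivAt.fun_sum (u := Finset.univ)
    (fun c _ => ((hA1 c).mul (hD c)).mul (hB1 c))).const_mul (t i * r j)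
  refine h.congr_fderiv ?_
  refine ContinuousLinearMap.ext fun H => ?_
  have hQM := cay_mul_invT (SA X) (SA_skew X)
  have hRM := cay_mul_invT (SB hNp X) (SB_skew hNp X)
  set M := (1 - SA X)⁻¹ with hM
  set R := (1 - SB hNp X)⁻¹ with hR
  have hA' : ((2:ℝ) • (Mᵀ * SA H * M))ᵀ = -((2:ℝ) • (Mᵀ * SA H * M)) := by
    simp only [Matrix.transpose_smul, Matrix.transpose_mul, Matrix.transpose_transpose, SA_skew,
      Matrix.neg_mul, Matrix.mul_neg, smul_neg, Matrix.mul_assoc]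
  have hB' : ((2:ℝ) • (Rᵀ * SB hNp H * R))ᵀ = -((2:ℝ) • (Rᵀ * SB hNp H * R)) := by
    simp only [Matrix.transpose_smul, Matrix.transpose_mul, Matrix.transpose_transpose, SB_skew,
      Matrix.neg_mul, Matrix.mul_neg, smul_neg, Matrix.mul_assoc]
  have hQ1 : ∀ Z : Matrix (Fin N) (Fin N) ℝ, cay (SA X) * Z.submatrix id ι =
      (cay (SA X) * Z).submatrix id ι := fun Z => rfl
  have hQA : cay (SA X) * ((2:ℝ) • (Mᵀ * SA H * M)) = (2:ℝ) • (M * SA H * M) := by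
    rw [Matrix.mul_smul, ← Matrix.mul_assoc, ← Matrix.mul_assoc, hQM]
  have hRB : cay (SB hNp X) * ((2:ℝ) • (Rᵀ * SB hNp H * R)) = (2:ℝ) • (R * SB hNp H * R) := by
    rw [Matrix.mul_smul, ← Matrix.mul_assoc, ← Matrix.mul_assoc, hRM]
  have hmat : cay (SA X) * Matrix.of (Phi hNp (dg hNp X) (Lx hNp X H)) * (cay (SB hNp X))ᵀ =
      ((2:ℝ) • (M * SA H * M)).submatrix id ι * diagonal (dg hNp X) * (Vc hNp X)ᵀ +
      Uc hNp X * diagonal (dg hNp H) * (Vc hNp X)ᵀ +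
      Uc hNp X * diagonal (dg hNp X) * ((2:ℝ) • (R * SB hNp H * R))ᵀ := by
    rw [Phi_eq]
    have e1 : (SA (Lx hNp X H)).submatrix id (Fin.castLE hNp) =
      ((2:ℝ) • (Mᵀ * SA H * M)).submatrix id ι := SA_mkX_sub hNp _ _ _ hA'
    have e2 : SB hNp (Lx hNp X H) = (2:ℝ) • (Rᵀ * SB hNp H * R) := SB_mkX hNp _ _ _ hB'
    have e3 : dg hNp (Lx hNp X H) = dg hNp H := dg_mkX hNp _ _ _
    rw [e1, e2, e3, ← hRB, ← hQA]
    simp only [Matrix.mul_add, Matrix.add_mul, ← Matrix.mul_assoc, Matrix.transpose_mul]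
    rw [hQ1, ← hι, hQ1, Matrix.mul_one]
    rfl
  change _ = t i * r j * (cay (SA X) * Matrix.of (Phi hNp (dg hNp X) (Lx hNp X H)) *
    (cay (SB hNp X))ᵀ) i j
  rw [hmat]
  have hL : ∀ c, LA c H = ((2:ℝ) • (M * SA H * M)) i (ι c) := fun c => by
    rw [hA2]; rfl
  have hL' : ∀ c, LB c H = ((2:ℝ) • (R * SB hNp H * R)) j c := fun c => by
    rw [hB2]; rfl
  simp only [ContinuousLinearMap.smul_apply, ContinuousLinearMap.sum_apply,
    ContinuousLinearMap.add_apply, hL, hL', smul_eq_mul]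
  rw [Matrix.add_apply, Matrix.add_apply, Matrix.mul_apply, Matrix.mul_apply, Matrix.mul_apply,
    ← Finset.sum_add_distrib, ← Finset.sum_add_distrib]
  congr 1
  apply Finset.sum_congr rfl
  intro c _
  simp only [Matrix.mul_diagonal, Matrix.submatrix_apply, id_eq, Matrix.transpose_apply]
  change _ + Vc hNp X j c * (Uc hNp X i c * H (ι c) c + _) = _
  change Uc hNp X i c * _ * _ + _ = _ + Uc hNp X i c * H (ι c) c * _ + _
  simp only [Pi.mul_apply]
  ring
end jac

section onedim

theorem cdf_continuous_of_noAtoms (m : Measure ℝ) [IsProbabilityMeasure m] [NullSingletonClass m] :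
    Continuous (cdf m) := by
  rw [continuous_iff_continuousAt]
  intro x
  have hmono := (cdf m).mono
  rw [hmono.continuousAt_iff_leftLim_eq_rightLim]
  have h1 : (cdf m).measure {x} = 0 := by rw [measure_cdf]; simp
  rw [StieltjesFunction.measure_singleton, ENNReal.ofReal_eq_zero] at h1
  have h2 := hmono.leftLim_le (le_refl x)
  rw [(cdf m).rightLim_eq]
  linarith

theorem cdf_surj (m : Measure ℝ) [IsProbabilityMeasure m] [NullSingletonClass m] (u : ℝ) (h0 : 0 < u)
    (h1 : u < 1) : ∃ z, cdf m z = u := by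
  have hc := cdf_continuous_of_noAtoms m
  obtain ⟨a, ha⟩ := ((tendsto_cdf_atBot m).eventually (gt_mem_nhds h0)).exists
  obtain ⟨b, hb⟩ := ((tendsto_cdf_atTop m).eventually (lt_mem_nhds h1)).exists
  exact mem_range_of_exists_le_of_exists_ge hc ⟨a, ha.le⟩ ⟨b, hb.le⟩

theorem cdf_real (m : Measure ℝ) [IsProbabilityMeasure m] (z : ℝ) :
    m.real (Set.Iic z) = cdf m z := (cdf_eq_real m z).symm

theorem cdf_lt_le (m : Measure ℝ) [IsProbabilityMeasure m] [NullSingletonClass m] (u : ℝ) (h0 : 0 < u)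
    (h1 : u < 1) : m.real {z | cdf m z < u} ≤ u := by
  obtain ⟨z0, hz⟩ := cdf_surj m u h0 h1
  have : {z | cdf m z < u} ⊆ Set.Iic z0 := by
    intro z hz'
    by_contra hlt
    have := (cdf m).mono (le_of_not_ge hlt)
    simp only [Set.mem_setOf_eq] at hz'
    linarith
  calc _ ≤ m.real (Set.Iic z0) := measureReal_mono this
    _ = u := by rw [cdf_real, hz]

theorem cdf_le_ge (m : Measure ℝ) [IsProbabilityMeasure m] [NullSingletonClass m] (u : ℝ) (h0 : 0 < u)
    (h1 : u < 1) : u ≤ m.real {z | cdf m z ≤ u} := by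
  obtain ⟨z0, hz⟩ := cdf_surj m u h0 h1
  have : Set.Iic z0 ⊆ {z | cdf m z ≤ u} := by
    intro z hz'
    have := (cdf m).mono hz'
    simp only [Set.mem_setOf_eq]
    linarith
  calc u = m.real (Set.Iic z0) := by rw [cdf_real, hz]
    _ ≤ _ := measureReal_mono this

theorem cdf_le_eq (m : Measure ℝ) [IsProbabilityMeasure m] [NullSingletonClass m] (u : ℝ) (h0 : 0 < u)
    (h1 : u < 1) : m.real {z | cdf m z ≤ u} = u := by
  refine le_antisymm ?_ (cdf_le_ge m u h0 h1)
  refine le_of_forall_gt_imp_ge_of_dense fun v hv => ?_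
  rcases lt_or_ge v 1 with h | h
  · refine le_trans (measureReal_mono fun z hz => ?_) (cdf_lt_le m v (h0.trans hv) h)
    exact lt_of_le_of_lt hz hv
  · exact le_trans measureReal_le_one h

theorem cdf_lt_eq (m : Measure ℝ) [IsProbabilityMeasure m] [NullSingletonClass m] (u : ℝ) (h0 : 0 < u)
    (h1 : u < 1) : m.real {z | cdf m z < u} = u := by
  refine le_antisymm (cdf_lt_le m u h0 h1) ?_
  refine le_of_forall_lt_imp_le_of_dense fun v hv => ?_
  rcases lt_or_ge 0 v with h | h
  · refine le_trans (cdf_le_ge m v h (hv.trans h1)) (measureReal_mono fun z hz => ?_)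
    exact lt_of_le_of_lt hz hv
  · exact le_trans h measureReal_nonneg

theorem cdf_between (m : Measure ℝ) [IsProbabilityMeasure m] [NullSingletonClass m] (a b : ℝ) (ha : 0 < a)
    (hab : a < b) (hb : b < 1) : m {z | a < cdf m z ∧ cdf m z < b} = ENNReal.ofReal (b - a) := by
  have hmeas : Measurable (cdf m) := (cdf m).mono.measurable
  have : {z | a < cdf m z ∧ cdf m z < b} = {z | cdf m z < b} \ {z | cdf m z ≤ a} := by
    ext z; simp; tauto
  have h2 : m.real {z | a < cdf m z ∧ cdf m z < b} = b - a := by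
    have hsub : {z | cdf m z ≤ a} ⊆ {z | cdf m z < b} :=
      fun z (hz : cdf m z ≤ a) => lt_of_le_of_lt hz hab
    rw [this, measureReal_sdiff hsub
      (measurableSet_le hmeas measurable_const), cdf_lt_eq m b (ha.trans hab) hb,
      cdf_le_eq m a ha (hab.trans hb)]
  rw [← h2, ofReal_measureReal]

/-- one-dimensional exactness -/
theorem oneD (φ : ℝ → ℝ) (I : Set ℝ) (hI : MeasurableSet I) (hφm : Measurable φ)
    (hφ : ∀ z ∈ I, 0 ≤ φ z) (hint : Integrable φ) (S : ℝ → ℝ)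
    (hS : ∀ z ∈ I, S z = (∫ x in I ∩ Set.Ioi z, φ x) / (∫ x in I, φ x))
    (α : ℝ) (h0 : 0 < α) (h1 : α < 1) :
    ∫⁻ z in I ∩ {z | α / 2 < min (S z) (1 - S z)}, ENNReal.ofReal (φ z) =
      ENNReal.ofReal (1 - α) * ∫⁻ z in I, ENNReal.ofReal (φ z) := by
  set T := ∫ x in I, φ x with hT
  have hTl : ∫⁻ z in I, ENNReal.ofReal (φ z) = ENNReal.ofReal T := by
    rw [hT, ofReal_integral_eq_lintegral_ofReal hint.integrableOn]
    exact (ae_restrict_iff' hI).mpr (Filter.Eventually.of_forall hφ)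
  have hT0 : 0 ≤ T := setIntegral_nonneg hI hφ
  rcases hT0.eq_or_lt with h | h
  · rw [hTl, ← h, ENNReal.ofReal_zero, mul_zero]
    have : ∫⁻ z in I, ENNReal.ofReal (φ z) = 0 := by rw [hTl, ← h, ENNReal.ofReal_zero]
    exact le_antisymm (this ▸ lintegral_mono_set Set.inter_subset_left) zero_le'
  set ν := (volume.restrict I).withDensity (fun z => ENNReal.ofReal (φ z)) with hν
  have hTne : ENNReal.ofReal T ≠ 0 := by simpa using h
  set m := (ENNReal.ofReal T)⁻¹ • ν with hm
  have hνu : ν Set.univ = ENNReal.ofReal T := by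
    rw [hν, withDensity_apply _ MeasurableSet.univ, Measure.restrict_univ, hTl]
  have hνi : ∀ s, MeasurableSet s → ν s = ∫⁻ z in I ∩ s, ENNReal.ofReal (φ z) := by
    intro s hs
    rw [hν, withDensity_apply _ hs, Measure.restrict_restrict hs, Set.inter_comm]
  haveI : IsProbabilityMeasure m := ⟨by
    rw [hm, Measure.smul_apply, hνu, smul_eq_mul, ENNReal.inv_mul_cancel hTne ENNReal.ofReal_ne_top]⟩
  haveI : NullSingletonClass m := ⟨fun x => by
    rw [hm, Measure.smul_apply, hνi _ (measurableSet_singleton x), setLIntegral_measure_zero, smul_zero]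
    exact measure_mono_null Set.inter_subset_right (by simp)⟩
  have hSz : ∀ z ∈ I, S z = 1 - cdf m z := by
    intro z hz
    rw [hS z hz]
    have e1 : m.real (Set.Ioi z) = 1 - cdf m z := by
      rw [← cdf_real, ← probReal_compl_eq_one_sub measurableSet_Iic, Set.compl_Iic]
    rw [← e1, measureReal_def, hm, Measure.smul_apply, hνi _ measurableSet_Ioi,
      ← ofReal_integral_eq_lintegral_ofReal hint.integrableOn
        ((ae_restrict_iff' (hI.inter measurableSet_Ioi)).mpr
          (Filter.Eventually.of_forall fun z hz => hφ z hz.1)), smul_eq_mul, ENNReal.toReal_mul,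
      ENNReal.toReal_inv, ENNReal.toReal_ofReal hT0, ENNReal.toReal_ofReal
        (setIntegral_nonneg (hI.inter measurableSet_Ioi) fun z hz => hφ z hz.1)]
    field_simp
  have hset : I ∩ {z | α / 2 < min (S z) (1 - S z)} =
      I ∩ {z | α / 2 < cdf m z ∧ cdf m z < 1 - α / 2} := by
    ext z
    simp only [Set.mem_inter_iff, Set.mem_setOf_eq, lt_min_iff]
    constructor
    · rintro ⟨hz, h1, h2⟩
      rw [hSz z hz] at h1 h2
      exact ⟨hz, by linarith, by linarith⟩
    · rintro ⟨hz, h1, h2⟩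
      rw [hSz z hz]
      exact ⟨hz, by linarith, by linarith⟩
  have hmeas : Measurable (cdf m) := (cdf m).mono.measurable
  have hms : MeasurableSet {z | α / 2 < cdf m z ∧ cdf m z < 1 - α / 2} :=
    (measurableSet_lt measurable_const hmeas).inter (measurableSet_lt hmeas measurable_const)
  have hb := cdf_between m (α/2) (1 - α/2) (by linarith) (by linarith) (by linarith)
  rw [hset, ← hνi _ hms, hTl]
  rw [hm, Measure.smul_apply, smul_eq_mul] at hb
  rw [show 1 - α = 1 - α / 2 - α / 2 by ring, ← hb, mul_comm, ← mul_assoc, ENNReal.mul_inv_cancel hTne ENNReal.ofReal_ne_top, one_mul]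
end onedim

section pis
open scoped ENNReal

theorem lmarginal_prod {n : ℕ} {α : Type*} [MeasurableSpace α] (μ : Fin n → Measure α)
    [∀ i, SigmaFinite (μ i)] (f : Fin n → α → ℝ≥0∞) (hf : ∀ i, Measurable (f i))
    (s : Finset (Fin n)) (x : Fin n → α) :
    lmarginal μ s (fun x => ∏ i, f i (x i)) x =
      (∏ i ∈ sᶜ, f i (x i)) * ∏ i ∈ s, ∫⁻ y, f i y ∂(μ i) := by
  classical
  induction s using Finset.induction_on generalizing x with
  | empty => simp
  | insert i s hi ih =>
    have hF : Measurable (fun x : Fin n → α => ∏ i, f i (x i)) :=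
      Finset.measurable_prod _ fun i _ => (hf i).comp (measurable_pi_apply i)
    rw [lmarginal_insert _ hF hi]
    simp only [ih]
    have hic : i ∈ sᶜ := by simpa using hi
    have e : ∀ y, ∏ j ∈ sᶜ, f j (Function.update x i y j) =
        f i y * ∏ j ∈ (insert i s)ᶜ, f j (x j) := by
      intro y
      rw [← Finset.mul_prod_erase _ _ hic, Function.update_self, Finset.compl_insert]
      congr 1
      apply Finset.prod_congr rfl
      intro j hj
      rw [Function.update_of_ne (Finset.ne_of_mem_erase hj)]
    simp only [e]
    rw [Finset.prod_insert hi]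
    simp only [mul_assoc]
    rw [lintegral_mul_const _ (hf i)]
    ring

theorem pi_withDensity {n : ℕ} {α : Type*} [MeasurableSpace α] (μ : Fin n → Measure α)
    [∀ i, SigmaFinite (μ i)] (f : Fin n → α → ℝ≥0∞) (hf : ∀ i, Measurable (f i))
    [∀ i, SigmaFinite ((μ i).withDensity (f i))] :
    Measure.pi (fun i => (μ i).withDensity (f i)) =
      (Measure.pi μ).withDensity (fun x => ∏ i, f i (x i)) := by
  classical
  refine Measure.pi_eq fun s hs => ?_
  rw [withDensity_apply _ (MeasurableSet.univ_pi hs), ← lintegral_indicator (MeasurableSet.univ_pi hs)]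
  have e : ∀ x : Fin n → α, (Set.univ.pi s).indicator (fun x => ∏ i, f i (x i)) x =
      ∏ i, (s i).indicator (f i) (x i) := by
    intro x
    by_cases hx : x ∈ Set.univ.pi s
    · rw [Set.indicator_of_mem hx]
      apply Finset.prod_congr rfl
      intro i _
      rw [Set.indicator_of_mem (hx i trivial)]
    · rw [Set.indicator_of_notMem hx]
      simp only [Set.mem_pi, Set.mem_univ, true_imp_iff, not_forall] at hx
      obtain ⟨i, hi⟩ := hx
      symm
      exact Finset.prod_eq_zero (Finset.mem_univ i) (Set.indicator_of_notMem hi _)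
  simp only [e]
  rcases isEmpty_or_nonempty (Fin n → α) with hα | ⟨⟨x⟩⟩
  · have hn : Nonempty (Fin n) := by
      by_contra h
      rw [not_nonempty_iff] at h
      exact hα.false (fun i => isEmptyElim i)
    have hα' : IsEmpty α := ⟨fun a => hα.false fun _ => a⟩
    rw [Measure.eq_zero_of_isEmpty (Measure.pi μ), lintegral_zero_measure]
    obtain ⟨i⟩ := hn
    symm
    apply Finset.prod_eq_zero (Finset.mem_univ i)
    rw [Set.eq_empty_of_isEmpty (s i), measure_empty]
  rw [lintegral_eq_lmarginal_univ x, lmarginal_prod μ _ (fun i => (hf i).indicator (hs i))]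
  simp only [Finset.compl_univ, Finset.prod_empty, one_mul]
  apply Finset.prod_congr rfl
  intro i _
  rw [lintegral_indicator (hs i), withDensity_apply _ (hs i)]

theorem gauss_density {N p : ℕ} (B : Fin N → Fin p → ℝ) (v : NNReal) (hv : v ≠ 0) :
    Measure.pi (fun i : Fin N => Measure.pi (fun j : Fin p => gaussianReal (B i j) v)) =
      (volume : Measure (Fin N → Fin p → ℝ)).withDensity
        (fun X => ∏ i, ∏ j, gaussianPDF (B i j) v (X i j)) := by
  have e : ∀ i : Fin N, Measure.pi (fun j : Fin p => gaussianReal (B i j) v) =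
      (volume : Measure (Fin p → ℝ)).withDensity (fun x => ∏ j, gaussianPDF (B i j) v (x j)) := by
    intro i
    haveI : ∀ j, SigmaFinite ((volume : Measure ℝ).withDensity (gaussianPDF (B i j) v)) := by
      intro j; rw [← gaussianReal_of_var_ne_zero _ hv]; infer_instance
    simp only [gaussianReal_of_var_ne_zero _ hv]
    exact pi_withDensity _ _ fun j => measurable_gaussianPDF _ _
  haveI : ∀ i : Fin N, SigmaFinite ((volume : Measure (Fin p → ℝ)).withDensity
      (fun x => ∏ j, gaussianPDF (B i j) v (x j))) := by
    intro i; rw [← e i]; infer_instance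
  simp only [e]
  exact pi_withDensity (fun _ : Fin N => (volume : Measure (Fin p → ℝ))) _ fun i =>
    Finset.measurable_prod _ fun j _ => (measurable_gaussianPDF _ _).comp (measurable_pi_apply j)

/-- Fubini in one coordinate of a doubly indexed product -/
theorem fubini_coord {N p : ℕ} (a : Fin N) (b : Fin p) (f g : (Fin N → Fin p → ℝ) → ℝ≥0∞)
    (hf : Measurable f) (hg : Measurable g)
    (h : ∀ X, ∫⁻ z, f (Function.update X a (Function.update (X a) b z)) =
      ∫⁻ z, g (Function.update X a (Function.update (X a) b z))) :
    ∫⁻ X, f X = ∫⁻ X, g X := by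
  refine lintegral_eq_of_lmarginal_eq {a} hf hg ?_
  funext X
  rw [lmarginal_singleton, lmarginal_singleton]
  have hu : Measurable fun y : Fin p → ℝ => Function.update X a y := measurable_update X
  refine lintegral_eq_of_lmarginal_eq {b} (hf.comp hu) (hg.comp hu) ?_
  funext x
  rw [lmarginal_singleton, lmarginal_singleton]
  have := h (Function.update X a x)
  simpa using this
end pis

section charts
variable {N p : ℕ} (hNp : p ≤ N)

/-- signed left frame -/
noncomputable def Ut (t : Fin N → ℝ) (X : Fin N → Fin p → ℝ) : Matrix (Fin N) (Fin p) ℝ :=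
  diagonal t * Uc hNp X

/-- signed right frame -/
noncomputable def Vr (r : Fin p → ℝ) (X : Fin N → Fin p → ℝ) : Matrix (Fin p) (Fin p) ℝ :=
  diagonal r * Vc hNp X

theorem diag_sq {n : ℕ} (t : Fin n → ℝ) (ht : ∀ i, t i ^ 2 = 1) :
    (diagonal t : Matrix (Fin n) (Fin n) ℝ) * diagonal t = 1 := by
  rw [diagonal_mul_diagonal, ← diagonal_one]
  congr 1; funext i; rw [← pow_two, ht]

theorem Ut_orth (t : Fin N → ℝ) (ht : ∀ i, t i ^ 2 = 1) (X : Fin N → Fin p → ℝ) :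
    (Ut hNp t X)ᵀ * Ut hNp t X = 1 := by
  have h1 : (Uc hNp X)ᵀ * Uc hNp X = 1 := by
    have h := cay_orth (SA X) (SA_skew X)
    have : (Uc hNp X)ᵀ * Uc hNp X = ((cay (SA X))ᵀ * cay (SA X)).submatrix (Fin.castLE hNp)
      (Fin.castLE hNp) := rfl
    rw [this, h]
    ext i j
    simp [Matrix.one_apply, Fin.ext_iff]
  rw [Ut, Matrix.transpose_mul, diagonal_transpose, Matrix.mul_assoc, ← Matrix.mul_assoc (diagonal t),
    diag_sq t ht, Matrix.one_mul, h1]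

theorem Vr_orth (r : Fin p → ℝ) (hr : ∀ i, r i ^ 2 = 1) (X : Fin N → Fin p → ℝ) :
    (Vr hNp r X)ᵀ * Vr hNp r X = 1 := by
  rw [Vr, Matrix.transpose_mul, diagonal_transpose, Matrix.mul_assoc, ← Matrix.mul_assoc (diagonal r),
    diag_sq r hr, Matrix.one_mul, Vc, cay_orth _ (SB_skew hNp X)]

theorem Fm_eq (t : Fin N → ℝ) (r : Fin p → ℝ) (X : Fin N → Fin p → ℝ) :
    Matrix.of (Fm hNp t r X) = Ut hNp t X * diagonal (dg hNp X) * (Vr hNp r X)ᵀ := by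
  ext i j
  rw [Matrix.mul_apply]
  simp only [Matrix.of_apply, Fm, Finset.mul_sum, Matrix.mul_diagonal, Matrix.transpose_apply, Ut, Vr,
    Matrix.diagonal_mul]
  apply Finset.sum_congr rfl
  intro c _
  ring

/-- sign normalisation of columns -/
def Nrm (V : Matrix (Fin p) (Fin p) ℝ) : Prop := ∀ c, ∃ j, 0 < V j c ∧ ∀ j', j' < j → V j' c = 0

/-- chamber condition -/
def Chm (d : Fin p → ℝ) : Prop := StrictAnti d ∧ ∀ j, 0 < d j

/-- chart domain -/
def Wd (r : Fin p → ℝ) : Set (Fin N → Fin p → ℝ) :=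
  {X | Chm (dg hNp X) ∧ Nrm (Vr hNp r X)}

theorem Nrm_sign (V : Matrix (Fin p) (Fin p) ℝ) (o : Fin p → ℝ) (ho : ∀ j, o j ^ 2 = 1)
    (h : Nrm V) (h' : Nrm (V * diagonal o)) : o = 1 := by
  funext c
  obtain ⟨j, hj, hz⟩ := h c
  obtain ⟨j', hj', hz'⟩ := h' c
  simp only [Matrix.mul_diagonal] at hj' hz'
  have h1 : o c = 1 ∨ o c = -1 := mul_self_eq_one_iff.mp (by rw [← pow_two]; exact ho c)
  rcases h1 with h1 | h1
  · exact h1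
  · exfalso
    rcases lt_trichotomy j j' with hl | hl | hl
    · have := hz' j hl; rw [h1] at this; linarith
    · rw [← hl, h1] at hj'; linarith
    · rw [hz j' hl] at hj'; simp at hj'

theorem diag_mul_cancel {n m : ℕ} (t : Fin n → ℝ) (ht : ∀ i, t i ^ 2 = 1)
    (A A' : Matrix (Fin n) (Fin m) ℝ) (h : diagonal t * A = diagonal t * A') : A = A' := by
  have := congrArg (fun Z => diagonal t * Z) h
  simpa only [← Matrix.mul_assoc, diag_sq t ht, Matrix.one_mul] using this

theorem Fm_injOn (t : Fin N → ℝ) (ht : ∀ i, t i ^ 2 = 1) (r : Fin p → ℝ) (hr : ∀ i, r i ^ 2 = 1) :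
    Set.InjOn (Fm hNp t r) (Wd hNp r) := by
  intro X hX X' hX' h
  have h1 : Matrix.of (Fm hNp t r X) = Matrix.of (Fm hNp t r X') := by rw [h]
  rw [Fm_eq, Fm_eq] at h1
  obtain ⟨hd, o, ho, hU, hV⟩ := svd_unique _ _ _ _ _ _ (Ut_orth hNp t ht X) (Ut_orth hNp t ht X')
    (Vr_orth hNp r hr X) (Vr_orth hNp r hr X') hX.1.1 hX'.1.1 hX.1.2 hX'.1.2 h1
  have ho1 : o = 1 := Nrm_sign _ o ho hX.2 (hV ▸ hX'.2)
  rw [ho1] at hU hV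
  have hone : (diagonal (1 : Fin p → ℝ) : Matrix (Fin p) (Fin p) ℝ) = 1 := diagonal_one
  rw [hone, Matrix.mul_one] at hU hV
  have hU' : Uc hNp X' = Uc hNp X := diag_mul_cancel t ht _ _ hU
  have hV' : Vc hNp X' = Vc hNp X := diag_mul_cancel r hr _ _ hV
  have hA : SA X' = SA X := cay_inj hNp _ _ (SA_skew X') (SA_skew X)
    (SA_zero X') (SA_zero X) hU'
  have hB : SB hNp X' = SB hNp X := cay_inj le_rfl _ _ (SB_skew hNp X') (SB_skew hNp X)
    (fun i j h => absurd i.2 (not_lt.mpr h)) (fun i j h => absurd i.2 (not_lt.mpr h)) (by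
      ext i j; exact congrFun (congrFun hV' i) j)
  rw [← mkX_SA_SB hNp X, ← mkX_SA_SB hNp X', hA, hB, hd]

theorem Fm_diff (t : Fin N → ℝ) (r : Fin p → ℝ) : Differentiable ℝ (Fm hNp t r) :=
  fun X => (Fm_hasFDeriv hNp t r X).differentiableAt

theorem Uc_cont (i : Fin N) (c : Fin p) : Continuous fun X : Fin N → Fin p → ℝ => Uc hNp X i c := by
  rw [continuous_iff_continuousAt]
  intro X
  obtain ⟨L, hL, -⟩ := cay_hasFDeriv (SAl (N := N) (p := p)) SA_skew X i (Fin.castLE hNp c)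
  exact hL.continuousAt

theorem Vc_cont (i : Fin p) (c : Fin p) : Continuous fun X : Fin N → Fin p → ℝ => Vc hNp X i c := by
  rw [continuous_iff_continuousAt]
  intro X
  obtain ⟨L, hL, -⟩ := cay_hasFDeriv (SBl hNp) (SB_skew hNp) X i c
  exact hL.continuousAt

theorem Ut_meas (t : Fin N → ℝ) (i : Fin N) (c : Fin p) :
    Measurable fun X : Fin N → Fin p → ℝ => Ut hNp t X i c := by
  simp only [Ut, Matrix.diagonal_mul]
  exact (Uc_cont hNp i c).measurable.const_mul _

theorem Vr_meas (r : Fin p → ℝ) (i : Fin p) (c : Fin p) :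
    Measurable fun X : Fin N → Fin p → ℝ => Vr hNp r X i c := by
  simp only [Vr, Matrix.diagonal_mul]
  exact (Vc_cont hNp i c).measurable.const_mul _

theorem dg_meas (c : Fin p) :
    Measurable fun X : Fin N → Fin p → ℝ => dg hNp X c := by
  exact (measurable_pi_apply c).comp (measurable_pi_apply (Fin.castLE hNp c))

theorem Wd_meas (r : Fin p → ℝ) : MeasurableSet (Wd hNp r) := by
  have : Wd hNp r = {X | (∀ a b : Fin p, a < b → dg hNp X b < dg hNp X a) ∧ (∀ j, 0 < dg hNp X j) ∧
      ∀ c, ∃ j, 0 < Vr hNp r X j c ∧ ∀ j', j' < j → Vr hNp r X j' c = 0} := by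
    ext X
    simp only [Wd, Chm, Nrm, StrictAnti, Set.mem_setOf_eq, and_assoc]
  rw [this]
  rw [measurableSet_setOf]
  refine Measurable.and ?_ (Measurable.and ?_ ?_)
  · refine Measurable.forall fun a => Measurable.forall fun b => ?_
    refine Measurable.imp measurable_const ?_
    exact measurableSet_setOf.mp (measurableSet_lt (dg_meas hNp b) (dg_meas hNp a))
  · exact Measurable.forall fun a =>
      measurableSet_setOf.mp (measurableSet_lt measurable_const (dg_meas hNp a))
  · refine Measurable.forall fun c => Measurable.exists fun j => Measurable.and ?_ ?_
    · exact measurableSet_setOf.mp (measurableSet_lt measurable_const (Vr_meas hNp r j c))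
    · refine Measurable.forall fun j' => Measurable.imp measurable_const ?_
      exact measurableSet_setOf.mp (measurableSet_eq_fun (Vr_meas hNp r j' c) measurable_const)

/-- saturation -/
def Sat (K : Set (Fin N → Fin p → ℝ)) : Prop :=
  ∀ (U : Matrix (Fin N) (Fin p) ℝ) (V : Matrix (Fin p) (Fin p) ℝ) (d d' : Fin p → ℝ),
    Uᵀ * U = 1 → Vᵀ * V = 1 → Chm d → Chm d' →
    Matrix.of.symm (U * diagonal d * Vᵀ) ∈ K → Matrix.of.symm (U * diagonal d' * Vᵀ) ∈ K

theorem Sat.diff {K L : Set (Fin N → Fin p → ℝ)} (hK : Sat K) (hL : Sat L) : Sat (K \ L) := by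
  intro U V d d' hU hV hd hd' h
  exact ⟨hK U V d d' hU hV hd hd' h.1, fun h' => h.2 (hL U V d' d hU hV hd' hd h')⟩

theorem Sat.union {K L : Set (Fin N → Fin p → ℝ)} (hK : Sat K) (hL : Sat L) : Sat (K ∪ L) := by
  intro U V d d' hU hV hd hd' h
  exact h.imp (hK U V d d' hU hV hd hd') (hL U V d d' hU hV hd hd')

theorem frame_sign (U : Matrix (Fin N) (Fin p) ℝ) (V : Matrix (Fin p) (Fin p) ℝ) (d o : Fin p → ℝ)
    (ho : ∀ j, o j ^ 2 = 1) :
    (U * diagonal o) * diagonal d * (V * diagonal o)ᵀ = U * diagonal d * Vᵀ := by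
  rw [Matrix.transpose_mul, diagonal_transpose]
  have : (diagonal o : Matrix (Fin p) (Fin p) ℝ) * diagonal d * diagonal o = diagonal d := by
    rw [diagonal_mul_diagonal, diagonal_mul_diagonal]
    congr 1; funext i; have := ho i; linear_combination d i * this
  calc _ = U * (diagonal o * diagonal d * diagonal o) * Vᵀ := by simp only [Matrix.mul_assoc]
    _ = _ := by rw [this]

theorem mkX_chart (t : Fin N → ℝ) (r : Fin p → ℝ) (X : Fin N → Fin p → ℝ) (d : Fin p → ℝ) :
    Ut hNp t (mkX hNp (SA X) (SB hNp X) d) = Ut hNp t X ∧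
    Vr hNp r (mkX hNp (SA X) (SB hNp X) d) = Vr hNp r X := by
  constructor
  · rw [Ut, Uc, SA_mkX hNp _ _ _ (SA_skew X) (SA_zero X)]; rfl
  · rw [Vr, Vc, SB_mkX hNp _ _ _ (SB_skew hNp X)]; rfl

theorem Sat_image (t : Fin N → ℝ) (ht : ∀ i, t i ^ 2 = 1) (r : Fin p → ℝ) (hr : ∀ i, r i ^ 2 = 1) :
    Sat (Fm hNp t r '' Wd hNp r) := by
  rintro U V d d' hU hV hd hd' ⟨X, hX, hXe⟩
  have h1 : Matrix.of (Fm hNp t r X) = U * diagonal d * Vᵀ := by rw [hXe]; rfl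
  rw [Fm_eq] at h1
  obtain ⟨hdd, o, ho, hU1, hV1⟩ := svd_unique _ _ _ _ _ _ (Ut_orth hNp t ht X) hU
    (Vr_orth hNp r hr X) hV hX.1.1 hd.1 hX.1.2 hd.2 h1
  obtain ⟨e1, e2⟩ := mkX_chart hNp t r X d'
  refine ⟨mkX hNp (SA X) (SB hNp X) d', ⟨?_, ?_⟩, ?_⟩
  · rw [dg_mkX]; exact hd'
  · rw [e2]; exact hX.2
  · rw [hU1, hV1, frame_sign _ _ _ _ ho]
    have := Fm_eq hNp t r (mkX hNp (SA X) (SB hNp X) d')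
    rw [e1, e2, dg_mkX] at this
    rw [← this]; rfl

/-- sign of a Bool -/
def sg (b : Bool) : ℝ := if b then 1 else -1

theorem sg_sq (b : Bool) : sg b ^ 2 = 1 := by cases b <;> simp [sg]

theorem exists_nrm (V : Matrix (Fin p) (Fin p) ℝ) (hV : Vᵀ * V = 1) :
    ∃ o : Fin p → ℝ, (∀ j, o j ^ 2 = 1) ∧ Nrm (V * diagonal o) := by
  have : ∀ c : Fin p, ∃ o : ℝ, o ^ 2 = 1 ∧ ∃ j, 0 < V j c * o ∧ ∀ j', j' < j → V j' c * o = 0 := by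
    intro c
    have hne : ∃ j, V j c ≠ 0 := by
      by_contra h
      push Not at h
      have h1 := congrFun (congrFun hV c) c
      rw [Matrix.mul_apply, Matrix.one_apply_eq] at h1
      simp [h] at h1
    have hfin : (Finset.univ.filter fun j => V j c ≠ 0).Nonempty := by
      obtain ⟨j, hj⟩ := hne; exact ⟨j, by simpa using hj⟩
    set j := (Finset.univ.filter fun j => V j c ≠ 0).min' hfin with hj
    have hjn : V j c ≠ 0 := by
      have := Finset.min'_mem _ hfin
      rw [← hj] at this
      simpa using this
    have hlt : ∀ j', j' < j → V j' c = 0 := by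
      intro j' hj'
      by_contra h
      have := Finset.min'_le (Finset.univ.filter fun j => V j c ≠ 0) j' (by simpa using h)
      rw [← hj] at this
      exact absurd hj' (not_lt.mpr this)
    rcases lt_or_gt_of_ne hjn with h | h
    · exact ⟨-1, by norm_num, j, by linarith, fun j' hj' => by rw [hlt j' hj', zero_mul]⟩
    · exact ⟨1, by norm_num, j, by linarith, fun j' hj' => by rw [hlt j' hj', zero_mul]⟩
  choose o ho hn using this
  refine ⟨o, ho, fun c => ?_⟩
  simp only [Matrix.mul_diagonal]
  exact hn c

theorem sign_unit (M : Matrix (Fin p) (Fin p) ℝ) :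
    ∃ r : Fin p → Bool, IsUnit (1 + diagonal (fun i => sg (r i)) * M) := by
  obtain ⟨r, hr⟩ := sign_lemma M
  refine ⟨r, ?_⟩
  rw [Matrix.isUnit_iff_isUnit_det, isUnit_iff_ne_zero]
  have e : (Matrix.of fun i j => (if r i then (1:ℝ) else -1) * (1 : Matrix (Fin p) (Fin p) ℝ) i j + M i j) =
      diagonal (fun i => sg (r i)) * (1 + diagonal (fun i => sg (r i)) * M) := by
    rw [Matrix.mul_add, Matrix.mul_one, ← Matrix.mul_assoc, diag_sq _ (fun i => sg_sq _),
      Matrix.one_mul]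
    ext i j
    simp only [Matrix.of_apply, Matrix.add_apply, sg, Matrix.diagonal_apply, Matrix.one_apply]
    split_ifs <;> ring
  rw [e, Matrix.det_mul] at hr
  exact right_ne_zero_of_mul hr

theorem chart_cover (U : Matrix (Fin N) (Fin p) ℝ) (V : Matrix (Fin p) (Fin p) ℝ) (d : Fin p → ℝ)
    (hU : Uᵀ * U = 1) (hV : Vᵀ * V = 1) :
    ∃ (t : Fin N → Bool) (r : Fin p → Bool) (X : Fin N → Fin p → ℝ), dg hNp X = d ∧
      Nrm (Vr hNp (fun i => sg (r i)) X) ∧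
      Matrix.of (Fm hNp (fun i => sg (t i)) (fun i => sg (r i)) X) = U * diagonal d * Vᵀ := by
  obtain ⟨o, ho, hn⟩ := exists_nrm V hV
  have horth : ∀ {n : ℕ} (Z : Matrix (Fin n) (Fin p) ℝ) (s : Fin n → ℝ), (∀ i, s i ^ 2 = 1) →
      Zᵀ * Z = 1 → (diagonal s * (Z * diagonal o))ᵀ * (diagonal s * (Z * diagonal o)) = 1 := by
    intro n Z s hs hZ
    rw [Matrix.transpose_mul, diagonal_transpose, Matrix.mul_assoc, ← Matrix.mul_assoc (diagonal s),
      diag_sq s hs, Matrix.one_mul, Matrix.transpose_mul, diagonal_transpose, Matrix.mul_assoc,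
      ← Matrix.mul_assoc Zᵀ, hZ, Matrix.one_mul, diag_sq o ho]
  obtain ⟨r, hr⟩ := sign_unit (V * diagonal o)
  obtain ⟨t0, ht0⟩ := sign_unit ((U * diagonal o).submatrix (Fin.castLE hNp) id)
  let t : Fin N → Bool := fun i => if h : i.val < p then t0 ⟨i, h⟩ else true
  have htop : (diagonal (fun i => sg (t i)) * (U * diagonal o)).submatrix (Fin.castLE hNp) id =
      diagonal (fun i => sg (t0 i)) * (U * diagonal o).submatrix (Fin.castLE hNp) id := by
    ext i j
    simp [Matrix.diagonal_mul, t]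
  obtain ⟨A, hA, hA0, hAe⟩ := cay_cover hNp (diagonal (fun i => sg (t i)) * (U * diagonal o))
    (horth U _ (fun i => sg_sq _) hU) (by rw [htop]; exact ht0)
  obtain ⟨B, hB, -, hBe⟩ := cay_cover le_rfl (diagonal (fun i => sg (r i)) * (V * diagonal o))
    (horth V _ (fun i => sg_sq _) hV) hr
  have hBe' : cay B = diagonal (fun i => sg (r i)) * (V * diagonal o) := by rw [← hBe]; rfl
  have e1 : Ut hNp (fun i => sg (t i)) (mkX hNp A B d) = U * diagonal o := by
    rw [Ut, Uc, SA_mkX hNp _ _ _ hA hA0, hAe, ← Matrix.mul_assoc, diag_sq _ (fun i => sg_sq _),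
      Matrix.one_mul]
  have e2 : Vr hNp (fun i => sg (r i)) (mkX hNp A B d) = V * diagonal o := by
    rw [Vr, Vc, SB_mkX hNp _ _ _ hB, hBe', ← Matrix.mul_assoc, diag_sq _ (fun i => sg_sq _),
      Matrix.one_mul]
  refine ⟨t, r, mkX hNp A B d, dg_mkX hNp _ _ _, ?_, ?_⟩
  · rw [e2]; exact hn
  · rw [Fm_eq, e1, e2, dg_mkX, frame_sign _ _ _ _ ho]
end charts

section stat
variable {N p : ℕ}

/-- linear statistic -/
def Lam (B : Matrix (Fin N) (Fin p) ℝ) (U : Fin N → Fin p → ℝ) (V : Fin p → Fin p → ℝ) (k : Fin p) : ℝ :=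
  ∑ i : Fin N, ∑ j : Fin p, U i k * B i j * V j k

/-- the integrand -/
noncomputable def phi (m : ℕ) (σ : ℝ) (k : Fin p) (d : Fin p → ℝ) (lam z : ℝ) : ℝ :=
  Real.exp (-(z - lam) ^ 2 / (2 * σ ^ 2)) * z ^ m * ∏ j ∈ Finset.univ.erase k, |z ^ 2 - d j ^ 2|

/-- the region -/
def rg (k : Fin p) (d : Fin p → ℝ) (a : ℝ) : Set ℝ :=
  {z : ℝ | a < z ∧ ∀ j : Fin p, (j : ℕ) < (k : ℕ) → z < d j}

/-- the statistic -/
noncomputable def Sb (m : ℕ) (σ : ℝ) (k k1 : Fin p) (d : Fin p → ℝ) (lam : ℝ) : ℝ :=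
  (∫ z in rg k d (d k), phi m σ k d lam z) / (∫ z in rg k d (d k1), phi m σ k d lam z)

theorem rg_meas (k : Fin p) (d : Fin p → ℝ) (a : ℝ) : MeasurableSet (rg k d a) := by
  unfold rg
  rw [measurableSet_setOf]
  refine Measurable.and (measurableSet_setOf.mp (measurableSet_lt measurable_const measurable_id)) ?_
  exact Measurable.forall fun j => Measurable.imp measurable_const
    (measurableSet_setOf.mp (measurableSet_lt measurable_id measurable_const))

theorem phi_meas (m : ℕ) (σ : ℝ) (k : Fin p) :
    Measurable fun q : ((Fin p → ℝ) × ℝ) × ℝ => phi m σ k q.1.1 q.1.2 q.2 := by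
  unfold phi
  refine Measurable.mul (by fun_prop) ?_
  refine Finset.measurable_prod _ fun j _ => ?_
  have : Measurable fun q : ((Fin p → ℝ) × ℝ) × ℝ => q.1.1 j :=
    (measurable_pi_apply j).comp (measurable_fst.comp measurable_fst)
  have h2 : Measurable fun q : ((Fin p → ℝ) × ℝ) × ℝ => q.2 ^ 2 - q.1.1 j ^ 2 :=
    (measurable_snd.pow_const 2).sub (this.pow_const 2)
  exact h2.abs

theorem num_meas (m : ℕ) (σ : ℝ) (k a : Fin p) :
    Measurable fun q : (Fin p → ℝ) × ℝ => ∫ z in rg k q.1 (q.1 a), phi m σ k q.1 q.2 z := by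
  have e : ∀ q : (Fin p → ℝ) × ℝ, ∫ z in rg k q.1 (q.1 a), phi m σ k q.1 q.2 z =
      ∫ z, ({w : ((Fin p → ℝ) × ℝ) × ℝ | w.2 ∈ rg k w.1.1 (w.1.1 a)}.indicator
        (fun w => phi m σ k w.1.1 w.1.2 w.2)) (q, z) := by
    intro q
    rw [← integral_indicator (rg_meas _ _ _)]
    rfl
  simp only [e]
  have hms : MeasurableSet {w : ((Fin p → ℝ) × ℝ) × ℝ | w.2 ∈ rg k w.1.1 (w.1.1 a)} := by
    have hc : ∀ j : Fin p, Measurable fun q : ((Fin p → ℝ) × ℝ) × ℝ => q.1.1 j := fun j =>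
      (measurable_pi_apply j).comp (measurable_fst.comp measurable_fst)
    simp only [rg, Set.mem_setOf_eq]
    rw [measurableSet_setOf]
    refine Measurable.and (measurableSet_setOf.mp (measurableSet_lt (hc a) measurable_snd)) ?_
    exact Measurable.forall fun j => Measurable.imp measurable_const
      (measurableSet_setOf.mp (measurableSet_lt measurable_snd (hc j)))
  exact (StronglyMeasurable.integral_prod_right'
    ((phi_meas m σ k).indicator hms).stronglyMeasurable).measurable

theorem Sb_meas (m : ℕ) (σ : ℝ) (k k1 : Fin p) :
    Measurable fun q : (Fin p → ℝ) × ℝ => Sb m σ k k1 q.1 q.2 :=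
  (num_meas m σ k k).div (num_meas m σ k k1)

theorem gauss_pow_int (σ : ℝ) (hσ : 0 < σ) (lam : ℝ) (m : ℕ) :
    Integrable fun z : ℝ => Real.exp (-(z - lam) ^ 2 / (2 * σ ^ 2)) * z ^ m := by
  have h0 : ∀ n : ℕ, Integrable fun z : ℝ => z ^ n * Real.exp (-(1 / (2 * σ ^ 2)) * z ^ 2) := by
    intro n
    have := integrable_rpow_mul_exp_neg_mul_sq (b := 1 / (2 * σ ^ 2)) (by positivity) (s := (n : ℝ))
      (by have : (0:ℝ) ≤ n := Nat.cast_nonneg n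
          linarith)
    simpa only [Real.rpow_natCast] using this
  have h1 : Integrable fun w : ℝ => Real.exp (-w ^ 2 / (2 * σ ^ 2)) * (w + lam) ^ m := by
    have : (fun w : ℝ => Real.exp (-w ^ 2 / (2 * σ ^ 2)) * (w + lam) ^ m) = fun w =>
        ∑ i ∈ Finset.range (m + 1), (lam ^ (m - i) * (m.choose i : ℝ)) *
          (w ^ i * Real.exp (-(1 / (2 * σ ^ 2)) * w ^ 2)) := by
      funext w
      rw [add_pow, Finset.mul_sum]
      apply Finset.sum_congr rfl
      intro i _
      rw [show -w ^ 2 / (2 * σ ^ 2) = -(1 / (2 * σ ^ 2)) * w ^ 2 by ring]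
      ring
    rw [this]
    exact integrable_finset_sum _ fun i _ => (h0 i).const_mul _
  have h2 := h1.comp_sub_right lam
  refine h2.congr (Filter.Eventually.of_forall fun z => ?_)
  simp

theorem phi_int_aux (σ : ℝ) (hσ : 0 < σ) (lam : ℝ) (d : Fin p → ℝ) (s : Finset (Fin p)) (m : ℕ) :
    Integrable fun z : ℝ => Real.exp (-(z - lam) ^ 2 / (2 * σ ^ 2)) * z ^ m *
      ∏ j ∈ s, |z ^ 2 - d j ^ 2| := by
  induction s using Finset.induction_on generalizing m with
  | empty => simpa using gauss_pow_int σ hσ lam m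
  | insert i s hi ih =>
    have h := (ih (m + 2)).sub ((ih m).const_mul (d i ^ 2))
    refine h.mono ?_ (Filter.Eventually.of_forall fun z => ?_)
    · apply Continuous.aestronglyMeasurable
      fun_prop
    · rw [Finset.prod_insert hi]
      apply le_of_eq
      have : ((fun z : ℝ => Real.exp (-(z - lam) ^ 2 / (2 * σ ^ 2)) * z ^ (m + 2) *
        ∏ j ∈ s, |z ^ 2 - d j ^ 2|) - fun z : ℝ => d i ^ 2 * (Real.exp (-(z - lam) ^ 2 / (2 * σ ^ 2)) * z ^ m *
        ∏ j ∈ s, |z ^ 2 - d j ^ 2|)) z = Real.exp (-(z - lam) ^ 2 / (2 * σ ^ 2)) * z ^ m *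
        ((z ^ 2 - d i ^ 2) * ∏ j ∈ s, |z ^ 2 - d j ^ 2|) := by
        simp only [Pi.sub_apply]; ring
      rw [this]
      simp only [norm_mul, Real.norm_eq_abs, abs_abs]

theorem phi_int (m : ℕ) (σ : ℝ) (hσ : 0 < σ) (k : Fin p) (d : Fin p → ℝ) (lam : ℝ) :
    Integrable (phi m σ k d lam) := phi_int_aux σ hσ lam d _ m

theorem phi_update (m : ℕ) (σ : ℝ) (k : Fin p) (d : Fin p → ℝ) (lam y : ℝ) :
    phi m σ k (Function.update d k y) lam = phi m σ k d lam := by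
  funext z
  unfold phi
  congr 1
  apply Finset.prod_congr rfl
  intro j hj
  rw [Function.update_of_ne (Finset.ne_of_mem_erase hj)]

theorem rg_update (k : Fin p) (d : Fin p → ℝ) (y a : ℝ) :
    rg k (Function.update d k y) a = rg k d a := by
  ext z
  simp only [rg, Set.mem_setOf_eq]
  refine and_congr_right fun _ => forall_congr' fun j => imp_congr_right fun hj => ?_
  rw [Function.update_of_ne]
  rintro rfl
  exact lt_irrefl _ hj

theorem chm_update (k k1 : Fin p) (hk : k1.val = k.val + 1) (d : Fin p → ℝ) (z0 z : ℝ)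
    (h0 : Chm (Function.update d k z0)) :
    Chm (Function.update d k z) ↔ z ∈ rg k d (d k1) := by
  have hne : ∀ j : Fin p, j.val ≠ k.val → j ≠ k := fun j h h' => h (by rw [h'])
  constructor
  · rintro ⟨h1, h2⟩
    constructor
    · have := h1 (show k < k1 by rw [Fin.lt_def]; omega)
      rwa [Function.update_self, Function.update_of_ne (hne _ (by omega))] at this
    · intro j hj
      have := h1 (show j < k from hj)
      rwa [Function.update_self, Function.update_of_ne (hne _ (by omega))] at this
  · rintro ⟨h1, h2⟩
    obtain ⟨g1, g2⟩ := h0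
    have hk1 : 0 < d k1 := by
      have := g2 k1
      rwa [Function.update_of_ne (hne _ (by omega))] at this
    constructor
    · intro a b hab
      have hab' : a.val < b.val := hab
      by_cases ha : a = k
      · subst ha
        rw [Function.update_self, Function.update_of_ne (hne _ (by omega))]
        rcases (show k1.val ≤ b.val by omega).eq_or_lt with h | h
        · have : k1 = b := Fin.ext h
          rwa [← this]
        · have := g1 (show k1 < b from h)
          rw [Function.update_of_ne (hne _ (by omega)), Function.update_of_ne (hne _ (by omega))] at this
          linarith
      · by_cases hb : b = k
        · subst hb
          rw [Function.update_self, Function.update_of_ne ha]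
          exact h2 a hab'
        · have := g1 hab
          rwa [Function.update_of_ne ha, Function.update_of_ne hb] at this ⊢
    · intro j
      by_cases hj : j = k
      · subst hj; rw [Function.update_self]; linarith
      · have := g2 j
        rwa [Function.update_of_ne hj] at this ⊢

/-- squared distance to `B` in terms of the SVD -/
theorem dist_sq (B : Matrix (Fin N) (Fin p) ℝ) (U : Matrix (Fin N) (Fin p) ℝ)
    (V : Matrix (Fin p) (Fin p) ℝ) (d : Fin p → ℝ) (hU : Uᵀ * U = 1) (hV : Vᵀ * V = 1) :
    ∑ i, ∑ j, ((U * diagonal d * Vᵀ) i j - B i j) ^ 2 =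
      (∑ c, (d c ^ 2 - 2 * d c * Lam B U V c)) + ∑ i, ∑ j, B i j ^ 2 := by
  have h1 : ∑ i, ∑ j, (U * diagonal d * Vᵀ) i j ^ 2 = ∑ c, d c ^ 2 := by
    have e : ∑ i, ∑ j, (U * diagonal d * Vᵀ) i j ^ 2 =
        Matrix.trace ((U * diagonal d * Vᵀ)ᵀ * (U * diagonal d * Vᵀ)) := by
      simp only [Matrix.trace, Matrix.diag_apply, Matrix.mul_apply (M := (U * diagonal d * Vᵀ)ᵀ),
        Matrix.transpose_apply]
      rw [Finset.sum_comm]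
      simp only [pow_two]
    rw [e]
    have e2 : (U * diagonal d * Vᵀ)ᵀ * (U * diagonal d * Vᵀ) = V * (diagonal d * diagonal d * Vᵀ) := by
      simp only [Matrix.transpose_mul, Matrix.transpose_transpose, diagonal_transpose]
      calc _ = V * diagonal d * (Uᵀ * U) * diagonal d * Vᵀ := by simp only [Matrix.mul_assoc]
        _ = _ := by rw [hU, Matrix.mul_one]; simp only [Matrix.mul_assoc]
    rw [e2, Matrix.trace_mul_comm, Matrix.mul_assoc, hV, Matrix.mul_one, diagonal_mul_diagonal,
      Matrix.trace_diagonal]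
    simp only [pow_two]
  have h2 : ∑ i, ∑ j, (U * diagonal d * Vᵀ) i j * B i j = ∑ c, d c * Lam B U V c := by
    have : ∀ i j, (U * diagonal d * Vᵀ) i j * B i j = ∑ c, d c * (U i c * B i j * V j c) := by
      intro i j
      rw [Matrix.mul_apply, Finset.sum_mul]
      simp only [Matrix.mul_diagonal, Matrix.transpose_apply]
      apply Finset.sum_congr rfl; intro c _; ring
    simp only [this, Lam, Finset.mul_sum]
    rw [Finset.sum_comm' (s := (Finset.univ : Finset (Fin p))) (t := fun _ => (Finset.univ : Finset (Fin N)))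
      (t' := Finset.univ) (s' := fun _ => Finset.univ) (by simp)]
    apply Finset.sum_congr rfl; intro i _
    rw [Finset.sum_comm]
  have : ∀ i j, ((U * diagonal d * Vᵀ) i j - B i j) ^ 2 = (U * diagonal d * Vᵀ) i j ^ 2 -
      2 * ((U * diagonal d * Vᵀ) i j * B i j) + B i j ^ 2 := fun i j => by ring
  simp only [this, Finset.sum_add_distrib, Finset.sum_sub_distrib, ← Finset.mul_sum]
  rw [h1, h2]
  congr 2
  rw [Finset.mul_sum]; apply Finset.sum_congr rfl; intro c _; ring

/-- density -/
noncomputable def dens (B : Matrix (Fin N) (Fin p) ℝ) (σ : ℝ) (X : Fin N → Fin p → ℝ) : ENNReal :=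
  ∏ i, ∏ j, gaussianPDF (B i j) ⟨σ ^ 2, sq_nonneg σ⟩ (X i j)

theorem dens_meas (B : Matrix (Fin N) (Fin p) ℝ) (σ : ℝ) : Measurable (dens B σ) :=
  Finset.measurable_prod _ fun i _ => Finset.measurable_prod _ fun j _ =>
    (measurable_gaussianPDF _ _).comp ((measurable_pi_apply j).comp (measurable_pi_apply i))

theorem dens_form (B : Matrix (Fin N) (Fin p) ℝ) (σ : ℝ) (X : Fin N → Fin p → ℝ) :
    dens B σ X = ENNReal.ofReal ((∏ _i : Fin N, ∏ _j : Fin p, (Real.sqrt (2 * Real.pi * σ ^ 2))⁻¹) *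
      Real.exp (-(∑ i, ∑ j, (X i j - B i j) ^ 2) / (2 * σ ^ 2))) := by
  unfold dens
  simp only [gaussianPDF]
  rw [show -(∑ i, ∑ j, (X i j - B i j) ^ 2) / (2 * σ ^ 2) =
    ∑ i, ∑ j, -(X i j - B i j) ^ 2 / (2 * σ ^ 2) by
      rw [neg_div, Finset.sum_div, ← Finset.sum_neg_distrib]
      apply Finset.sum_congr rfl; intro i _
      rw [Finset.sum_div, ← Finset.sum_neg_distrib]
      apply Finset.sum_congr rfl; intro j _
      ring]
  rw [Real.exp_sum]
  simp only [Real.exp_sum]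
  rw [← Finset.prod_mul_distrib]
  simp only [← Finset.prod_mul_distrib]
  rw [ENNReal.ofReal_prod_of_nonneg (fun i _ => Finset.prod_nonneg fun j _ => by positivity)]
  apply Finset.prod_congr rfl; intro i _
  rw [ENNReal.ofReal_prod_of_nonneg (fun j _ => by positivity)]
  rfl

theorem dens_fac (B : Matrix (Fin N) (Fin p) ℝ) (σ : ℝ) (U : Matrix (Fin N) (Fin p) ℝ)
    (V : Matrix (Fin p) (Fin p) ℝ) (hU : Uᵀ * U = 1) (hV : Vᵀ * V = 1) (k : Fin p) (d : Fin p → ℝ) :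
    ∃ c : ℝ, 0 ≤ c ∧ ∀ z X, Matrix.of X = U * diagonal (Function.update d k z) * Vᵀ →
      dens B σ X = ENNReal.ofReal (c * Real.exp (-(z - Lam B U V k) ^ 2 / (2 * σ ^ 2))) := by
  refine ⟨(∏ _i : Fin N, ∏ _j : Fin p, (Real.sqrt (2 * Real.pi * σ ^ 2))⁻¹) *
    Real.exp (-((∑ c ∈ Finset.univ.erase k, (d c ^ 2 - 2 * d c * Lam B U V c)) +
      (∑ i, ∑ j, B i j ^ 2) - Lam B U V k ^ 2) / (2 * σ ^ 2)), ?_, ?_⟩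
  · refine mul_nonneg (Finset.prod_nonneg fun _ _ => Finset.prod_nonneg fun _ _ => ?_) (Real.exp_nonneg _)
    positivity
  · intro z X hX
    rw [dens_form, mul_assoc (∏ _i : Fin N, ∏ _j : Fin p, (Real.sqrt (2 * Real.pi * σ ^ 2))⁻¹),
      ← Real.exp_add]
    congr 3
    have e : ∑ i, ∑ j, (X i j - B i j) ^ 2 = ∑ i, ∑ j,
      ((U * diagonal (Function.update d k z) * Vᵀ) i j - B i j) ^ 2 := by
      rw [← hX]; rfl
    rw [e, dist_sq B U V _ hU hV, ← Finset.add_sum_erase _ _ (Finset.mem_univ k)]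
    rw [Function.update_self]
    have e2 : ∑ c ∈ Finset.univ.erase k, (Function.update d k z c ^ 2 - 2 * Function.update d k z c *
        Lam B U V c) = ∑ c ∈ Finset.univ.erase k, (d c ^ 2 - 2 * d c * Lam B U V c) := by
      apply Finset.sum_congr rfl; intro c hc
      rw [Function.update_of_ne (Finset.ne_of_mem_erase hc)]
    rw [e2]
    ring
end stat

section key
variable {N p : ℕ} (hNp : p ≤ N)

/-- Jacobian weight -/
noncomputable def Jw (t : Fin N → ℝ) (r : Fin p → ℝ) (X : Fin N → Fin p → ℝ) : ENNReal :=
  ENNReal.ofReal |LinearMap.det (Psi hNp t r X ∘ₗ Phi hNp (dg hNp X) ∘ₗ Lx hNp X)|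

theorem Jw_eq (t : Fin N → ℝ) (r : Fin p → ℝ) (X : Fin N → Fin p → ℝ) :
    Jw hNp t r X = ENNReal.ofReal |(fderiv ℝ (Fm hNp t r) X).det| := by
  rw [(Fm_hasFDeriv hNp t r X).fderiv]; rfl

theorem Jw_meas (t : Fin N → ℝ) (r : Fin p → ℝ) : Measurable (Jw hNp t r) := by
  have : Jw hNp t r = fun X => ENNReal.ofReal |(fderiv ℝ (Fm hNp t r) X).det| :=
    funext (Jw_eq hNp t r)
  rw [this]
  have h1 : Measurable fun X => (fderiv ℝ (Fm hNp t r) X).det :=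
    ContinuousLinearMap.continuous_det.measurable.comp (measurable_fderiv ℝ (Fm hNp t r))
  exact h1.abs.ennreal_ofReal

/-- change one diagonal coordinate -/
def upd (k : Fin p) (X : Fin N → Fin p → ℝ) (z : ℝ) : Fin N → Fin p → ℝ :=
  Function.update X (Fin.castLE hNp k) (Function.update (X (Fin.castLE hNp k)) k z)

theorem upd_apply_ne (k : Fin p) (X : Fin N → Fin p → ℝ) (z : ℝ) (i : Fin N) (j : Fin p)
    (h : i.val ≠ j.val) : upd hNp k X z i j = X i j := by
  unfold upd
  by_cases hi : i = Fin.castLE hNp k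
  · subst hi
    rw [Function.update_self, Function.update_of_ne]
    rintro rfl; exact h rfl
  · rw [Function.update_of_ne hi]

theorem SA_upd (k : Fin p) (X : Fin N → Fin p → ℝ) (z : ℝ) : SA (upd hNp k X z) = SA X := by
  have : lowM (upd hNp k X z) = lowM X := by
    ext i j
    simp only [lowM, Matrix.of_apply]
    split_ifs with h1 h2
    · exact upd_apply_ne hNp k X z i _ (by have : j.val < i.val := h2; simp only; omega)
    · rfl
    · rfl
  rw [SA, this]; rfl

theorem SB_upd (k : Fin p) (X : Fin N → Fin p → ℝ) (z : ℝ) : SB hNp (upd hNp k X z) = SB hNp X := by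
  have : upM hNp (upd hNp k X z) = upM hNp X := by
    ext i j
    simp only [upM, Matrix.of_apply]
    split_ifs with h1
    · exact upd_apply_ne hNp k X z _ _ (by have : i.val < j.val := h1; simp only [Fin.val_castLE]; omega)
    · rfl
  rw [SB, this]; rfl

theorem dg_upd (k : Fin p) (X : Fin N → Fin p → ℝ) (z : ℝ) :
    dg hNp (upd hNp k X z) = Function.update (dg hNp X) k z := by
  funext j
  by_cases hj : j = k
  · subst hj; simp [dg, upd]
  · rw [Function.update_of_ne hj]
    have : Fin.castLE hNp j ≠ Fin.castLE hNp k := fun h => hj (Fin.castLE_injective hNp h)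
    simp [dg, upd, Function.update_of_ne this]

theorem Ut_upd (t : Fin N → ℝ) (k : Fin p) (X : Fin N → Fin p → ℝ) (z : ℝ) :
    Ut hNp t (upd hNp k X z) = Ut hNp t X := by
  simp only [Ut, Uc, SA_upd]

theorem Vr_upd (r : Fin p → ℝ) (k : Fin p) (X : Fin N → Fin p → ℝ) (z : ℝ) :
    Vr hNp r (upd hNp k X z) = Vr hNp r X := by
  simp only [Vr, Vc, SB_upd]

theorem Psi_upd (t : Fin N → ℝ) (r : Fin p → ℝ) (k : Fin p) (X : Fin N → Fin p → ℝ) (z : ℝ) :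
    Psi hNp t r (upd hNp k X z) = Psi hNp t r X := by
  refine LinearMap.ext fun H => ?_
  funext i j
  simp only [Psi, LinearMap.coe_mk, AddHom.coe_mk, SA_upd, SB_upd]

theorem Lx_upd (k : Fin p) (X : Fin N → Fin p → ℝ) (z : ℝ) :
    Lx hNp (upd hNp k X z) = Lx hNp X := by
  refine LinearMap.ext fun H => ?_
  simp only [Lx, LinearMap.coe_mk, AddHom.coe_mk, SA_upd, SB_upd]

/-- statistic in chart coordinates -/
noncomputable def Sx (B : Matrix (Fin N) (Fin p) ℝ) (σ : ℝ) (t : Fin N → ℝ) (r : Fin p → ℝ) (k k1 : Fin p)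
    (X : Fin N → Fin p → ℝ) : ℝ :=
  Sb (N - p) σ k k1 (dg hNp X) (Lam B (Ut hNp t X) (Vr hNp r X) k)

theorem Sx_meas (B : Matrix (Fin N) (Fin p) ℝ) (σ : ℝ) (t : Fin N → ℝ) (r : Fin p → ℝ) (k k1 : Fin p) :
    Measurable (Sx hNp B σ t r k k1) := by
  have h1 : Measurable fun X : Fin N → Fin p → ℝ => dg hNp X := measurable_pi_lambda _ (dg_meas hNp)
  have h2 : Measurable fun X : Fin N → Fin p → ℝ => Lam B (Ut hNp t X) (Vr hNp r X) k := by
    unfold Lam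
    refine Finset.measurable_sum _ fun i _ => Finset.measurable_sum _ fun j _ => ?_
    exact ((Ut_meas hNp t i k).mul_const _).mul (Vr_meas hNp r j k)
  exact (Sb_meas (N - p) σ k k1).comp (h1.prodMk h2)

/-- event in chart coordinates -/
def Ev (B : Matrix (Fin N) (Fin p) ℝ) (σ : ℝ) (t : Fin N → ℝ) (r : Fin p → ℝ) (k k1 : Fin p) (α : ℝ) :
    Set (Fin N → Fin p → ℝ) :=
  {X | α / 2 < min (Sx hNp B σ t r k k1 X) (1 - Sx hNp B σ t r k k1 X)}

theorem Ev_meas (B : Matrix (Fin N) (Fin p) ℝ) (σ : ℝ) (t : Fin N → ℝ) (r : Fin p → ℝ) (k k1 : Fin p)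
    (α : ℝ) : MeasurableSet (Ev hNp B σ t r k k1 α) :=
  measurableSet_lt measurable_const
    ((Sx_meas hNp B σ t r k k1).min ((Sx_meas hNp B σ t r k k1).const_sub 1))

theorem phi_meas_z {q : ℕ} (m : ℕ) (σ : ℝ) (k : Fin q) (D : Fin q → ℝ) (lam : ℝ) :
    Measurable (phi m σ k D lam) := by
  unfold phi
  refine Measurable.mul (by fun_prop) ?_
  refine Finset.measurable_prod _ fun j _ => ?_
  have h : Continuous fun z : ℝ => |z ^ 2 - D j ^ 2| := by fun_prop
  exact h.measurable

set_option maxHeartbeats 1000000 in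
theorem key_int (B : Matrix (Fin N) (Fin p) ℝ) (σ : ℝ) (hσ : 0 < σ)
    (t : Fin N → ℝ) (ht : ∀ i, t i ^ 2 = 1) (r : Fin p → ℝ) (hr : ∀ i, r i ^ 2 = 1)
    (k k1 : Fin p) (hk : k1.val = k.val + 1) (α : ℝ) (hα0 : 0 < α) (hα1 : α < 1)
    (K : Set (Fin N → Fin p → ℝ)) (hKm : MeasurableSet K) (hK : Sat K) :
    ∫⁻ X in (Wd hNp r ∩ Fm hNp t r ⁻¹' K) ∩ Ev hNp B σ t r k k1 α,
      Jw hNp t r X * dens B σ (Fm hNp t r X) =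
    ENNReal.ofReal (1 - α) * ∫⁻ X in (Wd hNp r ∩ Fm hNp t r ⁻¹' K),
      Jw hNp t r X * dens B σ (Fm hNp t r X) := by
  have hFm : Measurable (Fm hNp t r) := (Fm_diff hNp t r).continuous.measurable
  have hWK : MeasurableSet (Wd hNp r ∩ Fm hNp t r ⁻¹' K) := (Wd_meas hNp r).inter (hFm hKm)
  have hE := Ev_meas hNp B σ t r k k1 α
  have hh : Measurable fun X => Jw hNp t r X * dens B σ (Fm hNp t r X) :=
    (Jw_meas hNp t r).mul ((dens_meas B σ).comp hFm)
  set WK := Wd hNp r ∩ Fm hNp t r ⁻¹' K with hWKd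
  set h := fun X => Jw hNp t r X * dens B σ (Fm hNp t r X) with hhd
  rw [← lintegral_const_mul _ hh, ← lintegral_indicator (hWK.inter hE), ← lintegral_indicator hWK]
  refine fubini_coord (Fin.castLE hNp k) k _ _ (hh.indicator (hWK.inter hE))
    ((hh.const_mul _).indicator hWK) fun X => ?_
  change ∫⁻ z, (WK ∩ Ev hNp B σ t r k k1 α).indicator h (upd hNp k X z) =
    ∫⁻ z, WK.indicator (fun X => ENNReal.ofReal (1 - α) * h X) (upd hNp k X z)
  by_cases hex : ∃ z0, upd hNp k X z0 ∈ WK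
  swap
  · push Not at hex
    have e1 : ∀ z, (WK ∩ Ev hNp B σ t r k k1 α).indicator h (upd hNp k X z) = 0 := fun z =>
      Set.indicator_of_notMem (fun hz => hex z hz.1) _
    have e2 : ∀ z, WK.indicator (fun X => ENNReal.ofReal (1 - α) * h X) (upd hNp k X z) = 0 := fun z =>
      Set.indicator_of_notMem (fun hz => hex z hz) _
    simp only [e1, e2]
  obtain ⟨z0, hz0⟩ := hex
  set D := dg hNp X with hD
  set U := Ut hNp t X with hUd
  set V := Vr hNp r X with hVd
  have hU : Uᵀ * U = 1 := Ut_orth hNp t ht X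
  have hV : Vᵀ * V = 1 := Vr_orth hNp r hr X
  set lam := Lam B U V k with hlam
  set I := rg k D (D k1) with hI
  have hFz : ∀ z, Matrix.of (Fm hNp t r (upd hNp k X z)) = U * diagonal (Function.update D k z) * Vᵀ := by
    intro z; rw [Fm_eq, Ut_upd, Vr_upd, dg_upd]
  have hch0 : Chm (Function.update D k z0) := by
    have := hz0.1.1; rwa [dg_upd] at this
  have hnrm : Nrm V := by have := hz0.1.2; rwa [Vr_upd] at this
  have hDk1 : 0 < D k1 := by
    have := hch0.2 k1
    rwa [Function.update_of_ne (by rintro h; rw [h] at hk; omega)] at this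
  have hmem : ∀ z, upd hNp k X z ∈ WK ↔ z ∈ I := by
    intro z
    rw [hI, ← chm_update k k1 hk D z0 z hch0]
    constructor
    · intro hz
      have := hz.1.1; rwa [dg_upd] at this
    · intro hz
      refine ⟨⟨by rw [dg_upd]; exact hz, by rw [Vr_upd]; exact hnrm⟩, ?_⟩
      have := hK U V _ _ hU hV hch0 hz (by rw [← hFz]; exact hz0.2)
      rw [← hFz] at this
      exact this
  obtain ⟨c1, hc1, hdens⟩ := dens_fac B σ U V hU hV k D
  obtain ⟨w, hw0, hwu, hwd⟩ := det_Phi_fac hNp k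
  set C := |LinearMap.det (Psi hNp t r X)| * |LinearMap.det (Lx hNp X)| * w D * c1 with hC
  have hC0 : 0 ≤ C := mul_nonneg (mul_nonneg (mul_nonneg (abs_nonneg _) (abs_nonneg _)) (hw0 _)) hc1
  have hpos : ∀ z ∈ I, 0 < z := fun z hz => hDk1.trans hz.1
  have hhz : ∀ z ∈ I, h (upd hNp k X z) = ENNReal.ofReal C * ENNReal.ofReal (phi (N - p) σ k D lam z) := by
    intro z hz
    have e1 : |LinearMap.det (Phi hNp (Function.update D k z))| =
        (z ^ (N - p) * ∏ j ∈ Finset.univ.erase k, |z ^ 2 - D j ^ 2|) * w D := by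
      rw [hwd _ (by rw [Function.update_self]; exact (hpos z hz).le), hwu, Function.update_self]
      congr 2
      apply Finset.prod_congr rfl
      intro j hj
      rw [Function.update_of_ne (Finset.ne_of_mem_erase hj)]
    simp only [hhd, Jw]
    rw [hdens z _ (hFz z), Psi_upd, Lx_upd, dg_upd, LinearMap.det_comp, LinearMap.det_comp, abs_mul,
      abs_mul, e1, ← ENNReal.ofReal_mul hC0, ← ENNReal.ofReal_mul (by
        refine mul_nonneg (abs_nonneg _) (mul_nonneg (mul_nonneg (mul_nonneg
          (pow_nonneg (hpos z hz).le _) (Finset.prod_nonneg fun _ _ => abs_nonneg _)) (hw0 _))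
          (abs_nonneg _)))]
    congr 1
    rw [hC, phi]
    ring
  set Sz : ℝ → ℝ := fun z => Sb (N - p) σ k k1 (Function.update D k z) lam with hSz
  have hSzm : Measurable Sz := (Sb_meas (N - p) σ k k1).comp
    ((measurable_update D).prodMk measurable_const)
  have hEz : ∀ z, upd hNp k X z ∈ Ev hNp B σ t r k k1 α ↔ α / 2 < min (Sz z) (1 - Sz z) := by
    intro z
    simp only [Ev, Sx, Set.mem_setOf_eq, Ut_upd, Vr_upd, dg_upd]
    rfl
  have hIm : MeasurableSet I := rg_meas _ _ _
  have hEm : MeasurableSet {z | α / 2 < min (Sz z) (1 - Sz z)} :=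
    measurableSet_lt measurable_const (hSzm.min (hSzm.const_sub 1))
  have hphm : Measurable (phi (N - p) σ k D lam) :=
    phi_meas_z (N - p) σ k D lam
  have L1 : ∀ z, (WK ∩ Ev hNp B σ t r k k1 α).indicator h (upd hNp k X z) =
      (I ∩ {z | α / 2 < min (Sz z) (1 - Sz z)}).indicator
        (fun z => ENNReal.ofReal C * ENNReal.ofReal (phi (N - p) σ k D lam z)) z := by
    intro z
    by_cases hz : z ∈ I ∩ {z | α / 2 < min (Sz z) (1 - Sz z)}
    · rw [Set.indicator_of_mem hz, Set.indicator_of_mem (show upd hNp k X z ∈ WK ∩ Ev hNp B σ t r k k1 α from ⟨(hmem z).mpr hz.1, (hEz z).mpr hz.2⟩),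
        hhz z hz.1]
    · rw [Set.indicator_of_notMem hz, Set.indicator_of_notMem]
      rintro ⟨h1, h2⟩
      exact hz ⟨(hmem z).mp h1, (hEz z).mp h2⟩
  have L2 : ∀ z, WK.indicator (fun X => ENNReal.ofReal (1 - α) * h X) (upd hNp k X z) =
      I.indicator (fun z => ENNReal.ofReal (1 - α) * (ENNReal.ofReal C *
        ENNReal.ofReal (phi (N - p) σ k D lam z))) z := by
    intro z
    by_cases hz : z ∈ I
    · rw [Set.indicator_of_mem hz, Set.indicator_of_mem ((hmem z).mpr hz), hhz z hz]
    · rw [Set.indicator_of_notMem hz, Set.indicator_of_notMem fun h1 => hz ((hmem z).mp h1)]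
  simp only [L1, L2]
  rw [lintegral_indicator (hIm.inter hEm), lintegral_indicator hIm,
    lintegral_const_mul _ hphm.ennreal_ofReal,
    lintegral_const_mul _ (hphm.ennreal_ofReal.const_mul _), lintegral_const_mul _ hphm.ennreal_ofReal,
    oneD (phi (N - p) σ k D lam) I hIm hphm ?_ (phi_int _ σ hσ k D lam) Sz ?_ α hα0 hα1]
  · ring
  · intro z hz
    unfold phi
    exact mul_nonneg (mul_nonneg (Real.exp_nonneg _) (pow_nonneg (hpos z hz).le _))
      (Finset.prod_nonneg fun _ _ => abs_nonneg _)
  · intro z hz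
    have hrg : rg k D z = I ∩ Set.Ioi z := by
      ext x
      simp only [hI, rg, Set.mem_inter_iff, Set.mem_setOf_eq, Set.mem_Ioi]
      constructor
      · rintro ⟨h1, h2⟩; exact ⟨⟨lt_trans hz.1 h1, h2⟩, h1⟩
      · rintro ⟨⟨_, h2⟩, h1⟩; exact ⟨h1, h2⟩
    simp only [hSz, Sb, phi_update, rg_update, Function.update_self]
    rw [hrg, Function.update_of_ne (by rintro h; rw [h] at hk; omega)]
end key

section fin
variable {N p : ℕ} (hNp : p ≤ N)

theorem img_law (B : Matrix (Fin N) (Fin p) ℝ) (σ : ℝ)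
    (t : Fin N → ℝ) (ht : ∀ i, t i ^ 2 = 1) (r : Fin p → ℝ) (hr : ∀ i, r i ^ 2 = 1)
    (A : Set (Fin N → Fin p → ℝ)) (hA : MeasurableSet A) (hAW : A ⊆ Wd hNp r) :
    MeasurableSet (Fm hNp t r '' A) ∧
    (volume.withDensity (dens B σ)) (Fm hNp t r '' A) =
      ∫⁻ X in A, Jw hNp t r X * dens B σ (Fm hNp t r X) := by
  have hinj : Set.InjOn (Fm hNp t r) A := (Fm_injOn hNp t ht r hr).mono hAW
  have hd : ∀ x ∈ A, HasFDerivWithinAt (Fm hNp t r) (LinearMap.toContinuousLinearMap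
      (Psi hNp t r x ∘ₗ Phi hNp (dg hNp x) ∘ₗ Lx hNp x)) A x := fun x _ =>
    (Fm_hasFDeriv hNp t r x).hasFDerivWithinAt
  have hm : MeasurableSet (Fm hNp t r '' A) := measurable_image_of_fderivWithin hA hd hinj
  refine ⟨hm, ?_⟩
  rw [withDensity_apply _ hm, lintegral_image_eq_lintegral_abs_det_fderiv_mul volume hA hd hinj]
  rfl

theorem Lam_sign (B : Matrix (Fin N) (Fin p) ℝ) (U : Matrix (Fin N) (Fin p) ℝ)
    (V : Matrix (Fin p) (Fin p) ℝ) (o : Fin p → ℝ) (ho : ∀ j, o j ^ 2 = 1) (k : Fin p) :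
    Lam B (U * diagonal o) (V * diagonal o) k = Lam B U V k := by
  unfold Lam
  refine Finset.sum_congr rfl fun i _ => Finset.sum_congr rfl fun j _ => ?_
  rw [Matrix.mul_diagonal, Matrix.mul_diagonal]
  have := ho k
  linear_combination (U i k * B i j * V j k) * this

theorem bad_null (hlt : p < N) (t : Fin N → ℝ) (r : Fin p → ℝ) :
    (volume : Measure (Fin N → Fin p → ℝ))
      (Fm hNp t r '' {X | LinearMap.det (Phi hNp (dg hNp X)) = 0}) = 0 := by
  refine addHaar_image_eq_zero_of_det_fderivWithin_eq_zero volume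
    (f' := fun x => LinearMap.toContinuousLinearMap
      (Psi hNp t r x ∘ₗ Phi hNp (dg hNp x) ∘ₗ Lx hNp x))
    (fun x _ => (Fm_hasFDeriv hNp t r x).hasFDerivWithinAt) fun x hx => ?_
  change LinearMap.det (Psi hNp t r x ∘ₗ Phi hNp (dg hNp x) ∘ₗ Lx hNp x) = 0
  rw [LinearMap.det_comp, LinearMap.det_comp]
  have : LinearMap.det (Phi hNp (dg hNp x)) = 0 := hx
  rw [this]; ring

theorem main_gen (hlt : p < N) (σ : ℝ) (hσ : 0 < σ) (B : Matrix (Fin N) (Fin p) ℝ)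
    (k k1 : Fin p) (hk : k1.val = k.val + 1) (α : ℝ) (hα0 : 0 < α) (hα1 : α < 1)
    {Ω : Type} [MeasurableSpace Ω] (P : Measure Ω) [IsProbabilityMeasure P]
    (Y U : Ω → Fin N → Fin p → ℝ) (V : Ω → Fin p → Fin p → ℝ) (d : Ω → Fin p → ℝ)
    (hYm : Measurable Y)
    (hlaw : Measure.map Y P =
      Measure.pi (fun i : Fin N => Measure.pi (fun j : Fin p =>
        gaussianReal (B i j) ⟨σ ^ 2, sq_nonneg σ⟩)))
    (hSVD : ∀ ω, Matrix.of (Y ω) =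
      Matrix.of (U ω) * Matrix.diagonal (d ω) * (Matrix.of (V ω))ᵀ)
    (hUorth : ∀ ω, (Matrix.of (U ω))ᵀ * Matrix.of (U ω) = 1)
    (hVorth : ∀ ω, (Matrix.of (V ω))ᵀ * Matrix.of (V ω) = 1)
    (hanti : ∀ ω, Antitone (d ω))
    (hnonneg : ∀ ω i, 0 ≤ d ω i)
    (S : Ω → ℝ)
    (hS : ∀ ω, S ω = Sb (N - p) σ k k1 (d ω) (Lam B (U ω) (V ω) k)) :
    P {ω | α / 2 < min (S ω) (1 - S ω)} = ENNReal.ofReal (1 - α) := by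
  have hNp : p ≤ N := hlt.le
  set G := {ω | α / 2 < min (S ω) (1 - S ω)} with hG
  have hlaw' : Measure.map Y P = volume.withDensity (dens B σ) := by
    have hv : (⟨σ ^ 2, sq_nonneg σ⟩ : NNReal) ≠ 0 := by
      intro h
      have : σ ^ 2 = 0 := congrArg NNReal.toReal h
      exact (pow_pos hσ 2).ne' this
    exact hlaw.trans (gauss_density B _ hv)
  let I := (Fin N → Bool) × (Fin p → Bool)
  let tt : I → Fin N → ℝ := fun i a => sg (i.1 a)
  let rr : I → Fin p → ℝ := fun i a => sg (i.2 a)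
  have htt : ∀ i a, tt i a ^ 2 = 1 := fun i a => sg_sq _
  have hrr : ∀ i a, rr i a ^ 2 = 1 := fun i a => sg_sq _
  have hchart : ∀ ω, ∃ i : I, ∃ X, dg hNp X = d ω ∧ Nrm (Vr hNp (rr i) X) ∧
      Fm hNp (tt i) (rr i) X = Y ω := by
    intro ω
    obtain ⟨t, r, X, h1, h2, h3⟩ := chart_cover hNp (Matrix.of (U ω)) (Matrix.of (V ω)) (d ω)
      (hUorth ω) (hVorth ω)
    refine ⟨(t, r), X, h1, h2, ?_⟩
    rw [← hSVD ω] at h3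
    exact Matrix.of.injective h3
  have hch : ∀ᵐ ω ∂P, Chm (d ω) := by
    have h0 : (Measure.map Y P) (⋃ i : I, Fm hNp (tt i) (rr i) ''
        {X | LinearMap.det (Phi hNp (dg hNp X)) = 0}) = 0 := by
      rw [hlaw']
      refine withDensity_absolutelyContinuous _ _ ?_
      exact measure_iUnion_null fun i => bad_null hNp hlt _ _
    have h1 := Measure.preimage_null_of_map_null hYm.aemeasurable h0
    rw [ae_iff]
    refine measure_mono_null (fun ω hω => ?_) h1
    obtain ⟨i, X, e1, e2, e3⟩ := hchart ω
    refine Set.mem_iUnion.mpr ⟨i, X, ?_, e3⟩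
    change LinearMap.det (Phi hNp (dg hNp X)) = 0
    rw [e1]
    exact det_Phi_zero hNp hlt _ (hanti ω) (hnonneg ω) hω
  let C : I → Set (Fin N → Fin p → ℝ) := fun i => Fm hNp (tt i) (rr i) '' Wd hNp (rr i)
  have hCm : ∀ i, MeasurableSet (C i) := fun i =>
    (img_law hNp B σ (tt i) (htt i) (rr i) (hrr i) _ (Wd_meas hNp (rr i)) subset_rfl).1
  have hone : ∀ i (K : Set (Fin N → Fin p → ℝ)), MeasurableSet K → Sat K → K ⊆ C i →
      P (G ∩ Y ⁻¹' K) = ENNReal.ofReal (1 - α) * P (Y ⁻¹' K) := by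
    intro i K hKm hK hKC
    have hFm : Measurable (Fm hNp (tt i) (rr i)) := (Fm_diff hNp _ _).continuous.measurable
    have hWK : MeasurableSet (Wd hNp (rr i) ∩ Fm hNp (tt i) (rr i) ⁻¹' K) :=
      (Wd_meas hNp _).inter (hFm hKm)
    obtain ⟨m1, l1⟩ := img_law hNp B σ (tt i) (htt i) (rr i) (hrr i) _ hWK Set.inter_subset_left
    obtain ⟨m2, l2⟩ := img_law hNp B σ (tt i) (htt i) (rr i) (hrr i) _
      (hWK.inter (Ev_meas hNp B σ (tt i) (rr i) k k1 α))
      (Set.inter_subset_left.trans Set.inter_subset_left)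
    have hKe : Fm hNp (tt i) (rr i) '' (Wd hNp (rr i) ∩ Fm hNp (tt i) (rr i) ⁻¹' K) = K := by
      rw [Set.image_inter_preimage]
      exact Set.inter_eq_right.mpr hKC
    rw [key_int hNp B σ hσ (tt i) (htt i) (rr i) (hrr i) k k1 hk α hα0 hα1 K hKm hK, ← l1, hKe,
      ← hlaw', Measure.map_apply hYm hKm, Measure.map_apply hYm m2] at l2
    rw [← l2]
    refine measure_congr ?_
    filter_upwards [hch] with ω hω
    have hSx : ∀ X ∈ Wd hNp (rr i), Fm hNp (tt i) (rr i) X = Y ω →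
        S ω = Sx hNp B σ (tt i) (rr i) k k1 X := by
      intro X hX he
      have h1 : Matrix.of (Fm hNp (tt i) (rr i) X) = Matrix.of (Y ω) := by rw [he]
      rw [Fm_eq, hSVD] at h1
      obtain ⟨hd, o, ho, hU1, hV1⟩ := svd_unique _ _ _ _ _ _ (Ut_orth hNp (tt i) (htt i) X)
        (hUorth ω) (Vr_orth hNp (rr i) (hrr i) X) (hVorth ω) hX.1.1 hω.1 hX.1.2 hω.2 h1
      rw [hS, Sx, hd]
      congr 1
      change Lam B (Matrix.of (U ω)) (Matrix.of (V ω)) k = _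
      rw [hU1, hV1, Lam_sign _ _ _ _ ho]
    apply propext
    constructor
    · rintro ⟨hg, hy⟩
      obtain ⟨X, hX, he⟩ := hKC hy
      refine ⟨X, ⟨⟨hX, ?_⟩, ?_⟩, he⟩
      · change Fm hNp (tt i) (rr i) X ∈ K
        rw [he]; exact hy
      · change α / 2 < min _ _
        rw [← hSx X hX he]; exact hg
    · rintro ⟨X, ⟨⟨hX, hXK⟩, hE⟩, he⟩
      refine ⟨?_, ?_⟩
      · change α / 2 < min _ _
        rw [hSx X hX he]; exact hE
      · change Y ω ∈ K
        rw [← he]; exact hXK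
  have hind : ∀ T : Finset I, ∃ K : Set (Fin N → Fin p → ℝ), MeasurableSet K ∧ Sat K ∧
      (∀ i ∈ T, C i ⊆ K) ∧ P (G ∩ Y ⁻¹' K) = ENNReal.ofReal (1 - α) * P (Y ⁻¹' K) := by
    intro T
    induction T using Finset.induction_on with
    | empty =>
      refine ⟨∅, MeasurableSet.empty, fun _ _ _ _ _ _ _ _ h => h, by simp, by simp⟩
    | insert i T hi ih =>
      obtain ⟨K, hKm, hK, hT, hP⟩ := ih
      have hCs : Sat (C i) := Sat_image hNp (tt i) (htt i) (rr i) (hrr i)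
      refine ⟨K ∪ C i, hKm.union (hCm i), hK.union hCs, ?_, ?_⟩
      · intro j hj
        rcases Finset.mem_insert.mp hj with rfl | hj
        · exact Set.subset_union_right
        · exact (hT j hj).trans Set.subset_union_left
      · have h2 := hone i (C i \ K) ((hCm i).diff hKm) (hCs.diff hK) Set.diff_subset
        have hm : MeasurableSet (Y ⁻¹' K) := hYm hKm
        rw [← measure_inter_add_diff (G ∩ Y ⁻¹' (K ∪ C i)) hm,
          ← measure_inter_add_diff (Y ⁻¹' (K ∪ C i)) hm, mul_add]
        have e1 : G ∩ Y ⁻¹' (K ∪ C i) ∩ Y ⁻¹' K = G ∩ Y ⁻¹' K := by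
          ext ω; simp only [Set.mem_inter_iff, Set.mem_preimage, Set.mem_union]; tauto
        have e2 : (G ∩ Y ⁻¹' (K ∪ C i)) \ Y ⁻¹' K = G ∩ Y ⁻¹' (C i \ K) := by
          ext ω
          simp only [Set.mem_inter_iff, Set.mem_preimage, Set.mem_union, Set.mem_diff]; tauto
        have e3 : Y ⁻¹' (K ∪ C i) ∩ Y ⁻¹' K = Y ⁻¹' K := by
          ext ω; simp only [Set.mem_inter_iff, Set.mem_preimage, Set.mem_union]; tauto
        have e4 : Y ⁻¹' (K ∪ C i) \ Y ⁻¹' K = Y ⁻¹' (C i \ K) := by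
          ext ω
          simp only [Set.mem_preimage, Set.mem_union, Set.mem_diff]; tauto
        rw [e1, e2, e3, e4, hP, h2]
  obtain ⟨K, hKm, -, hCK, hP⟩ := hind Finset.univ
  have hae : ∀ᵐ ω ∂P, ω ∈ Y ⁻¹' K := by
    filter_upwards [hch] with ω hω
    obtain ⟨i, X, e1, e2, e3⟩ := hchart ω
    exact hCK i (Finset.mem_univ i) ⟨X, ⟨by rw [e1]; exact hω, e2⟩, e3⟩
  have h1 : P (Y ⁻¹' K) = 1 := by
    rw [← prob_compl_eq_zero_iff (hYm hKm)]
    exact hae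
  have h2 : P (G ∩ Y ⁻¹' K) = P G := by
    refine measure_congr ?_
    filter_upwards [hae] with ω hω
    exact propext ⟨fun h => h.1, fun h => ⟨h, hω⟩⟩
  rw [← h2, hP, h1, mul_one]
end fin

/-- **Exact coverage of the confidence interval `CI_k` (Section 2.4).**
Model: `Y = B + E ∈ ℝ^{N×p}` (`N > p ≥ 1`) with i.i.d. `N(0,σ²)` noise entries; `Y = U D Vᵀ`
a measurably chosen SVD with decreasing nonnegative singular values `d`.  Fix a zero-based
index `k` with `k + 1 < p` and a level `α ∈ (0,1)`.  Let
`Λ̃ = U_kᵀ B V_k` and, for `δ ∈ ℝ`,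
`S_{k,δ} = (∫_{d_k}^{d_{k-1}} e^{-(z-δ)²/(2σ²)} z^{N-p} ∏_{j≠k} |z²-d_j²| dz) /
           (∫_{d_{k+1}}^{d_{k-1}} e^{-(z-δ)²/(2σ²)} z^{N-p} ∏_{j≠k} |z²-d_j²| dz)`.
Then `P(Λ̃ ∈ CI_k) = P(min(S_{k,Λ̃}, 1 - S_{k,Λ̃}) > α/2) = 1 - α`.  The upper limit
`d_{k-1}` (convention `d_{-1} = ∞`) is encoded by `∀ j < k, z < d j`. -/
theorem confidence_interval_exact_coverage
    (N p : ℕ) (hNp : p < N) (hp : 1 ≤ p)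
    (σ : ℝ) (hσ : 0 < σ)
    (B : Matrix (Fin N) (Fin p) ℝ)
    (k : ℕ) (hk : k + 1 < p)
    (α : ℝ) (hα0 : 0 < α) (hα1 : α < 1)
    {Ω : Type} [MeasurableSpace Ω] (P : Measure Ω) [IsProbabilityMeasure P]
    (Y U : Ω → Fin N → Fin p → ℝ) (V : Ω → Fin p → Fin p → ℝ) (d : Ω → Fin p → ℝ)
    (hYm : Measurable Y) (hUm : Measurable U) (hVm : Measurable V) (hdm : Measurable d)
    (hlaw : Measure.map Y P =
      Measure.pi (fun i : Fin N => Measure.pi (fun j : Fin p =>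
        gaussianReal (B i j) ⟨σ ^ 2, sq_nonneg σ⟩)))
    (hSVD : ∀ ω, Matrix.of (Y ω) =
      Matrix.of (U ω) * Matrix.diagonal (d ω) * (Matrix.of (V ω))ᵀ)
    (hUorth : ∀ ω, (Matrix.of (U ω))ᵀ * Matrix.of (U ω) = 1)
    (hVorth : ∀ ω, (Matrix.of (V ω))ᵀ * Matrix.of (V ω) = 1)
    (hanti : ∀ ω, Antitone (d ω))
    (hnonneg : ∀ ω i, 0 ≤ d ω i)
    (S : Ω → ℝ)
    (hS : ∀ ω, S ω =
      (∫ z in {z : ℝ | d ω ⟨k, by omega⟩ < z ∧ ∀ j : Fin p, (j : ℕ) < k → z < d ω j},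
        Real.exp (-(z - ∑ i : Fin N, ∑ j : Fin p,
            U ω i ⟨k, by omega⟩ * B i j * V ω j ⟨k, by omega⟩) ^ 2 / (2 * σ ^ 2)) *
          z ^ (N - p) *
          ∏ j ∈ Finset.univ.erase (⟨k, by omega⟩ : Fin p), |z ^ 2 - d ω j ^ 2|) /
      (∫ z in {z : ℝ | d ω ⟨k + 1, by omega⟩ < z ∧ ∀ j : Fin p, (j : ℕ) < k → z < d ω j},
        Real.exp (-(z - ∑ i : Fin N, ∑ j : Fin p,
            U ω i ⟨k, by omega⟩ * B i j * V ω j ⟨k, by omega⟩) ^ 2 / (2 * σ ^ 2)) *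
          z ^ (N - p) *
          ∏ j ∈ Finset.univ.erase (⟨k, by omega⟩ : Fin p), |z ^ 2 - d ω j ^ 2|)) :
    P {ω | α / 2 < min (S ω) (1 - S ω)} = ENNReal.ofReal (1 - α) := by
  refine main_gen hNp σ hσ B ⟨k, by omega⟩ ⟨k + 1, by omega⟩ rfl α hα0 hα1 P Y U V d hYm hlaw hSVD
    hUorth hVorth hanti hnonneg S fun ω => ?_
  rw [hS ω]
  rfl
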